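/- Fix i = 1 or i = 2. If x ∈ G(𝒜) satisfies x^{p_i} = e but x ≠ e, then there exist g ∈ G(𝒜) and an integer n with p_i ∤ n such that x = g f_i^n g⁻¹. -/

import Mathlib

/-!
Common setup: an `L`-structure `𝒜` for a language whose symbols are enumerated
(`m`-th symbol, `m ≥ 1`, each a function or relation symbol of arity ≥ 1), and the
presented group `G(𝒜)` of Harrison-Trainor and Ho.
-/

/-- A first-order language with symbols enumerated by `ℕ` (the `m`-th symbol, for `m ≥ 1`,
is a function symbol if `isFunc m`, and a relation symbol otherwise, of arity `arity m ≥ 1`),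
together with an interpretation on a domain `A`: `funcInterp m` interprets the `m`-th symbol
when it is a function symbol, and `relInterp m` when it is a relation symbol. -/
structure IndexedStructure where
  A : Type
  arity : ℕ → ℕ
  arity_pos : ∀ m, 1 ≤ m → 1 ≤ arity m
  isFunc : ℕ → Prop
  funcInterp : ∀ m, (Fin (arity m) → A) → A
  relInterp : ∀ m, (Fin (arity m) → A) → Prop

/-- The generating set of `G(𝒜)`: one generator for each element of the domain `A`,
plus five further generators `b`, `c`, `d`, `f₁`, `f₂`. -/
inductive GenSym (A : Type) : Type
  | elt : A → GenSym A
  | b : GenSym A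
  | c : GenSym A
  | d : GenSym A
  | f1 : GenSym A
  | f2 : GenSym A

/-- `chainProd lo x y = x y^{(lo+1)²} x y^{(lo+2)²} ⋯ x y^{(lo+1000)²}`.
So `u_A = chainProd 0`, `u_b = chainProd 1000`, `u_c = chainProd 2000`,
`u_d = chainProd 3000`, and `v = chainProd 4000`. -/
def chainProd {G : Type*} [Group G] (lo : ℕ) (x y : G) : G :=
  ((List.range 1000).map fun k => x * y ^ ((lo + k + 1) ^ 2)).prod

/-- `wProd m xs y = x₁⋯xₙ y^{100m+1} x₁⋯xₙ y^{100m+2} ⋯ x₁⋯xₙ y^{100m+100}`,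
i.e. the word `w_m(x₁,…,xₙ,y)`. -/
def wProd {G : Type*} [Group G] (m : ℕ) {n : ℕ} (xs : Fin n → G) (y : G) : G :=
  ((List.range 100).map fun k => (List.ofFn xs).prod * y ^ (100 * m + k + 1)).prod

/-- The set of relators of the presentation of `G(𝒜)`. -/
def grpRels (S : IndexedStructure) (p₁ p₂ : ℕ) : Set (FreeGroup (GenSym S.A)) :=
  {FreeGroup.of GenSym.f1 ^ p₁, FreeGroup.of GenSym.f2 ^ p₂,
    chainProd 4000 (FreeGroup.of GenSym.f1) (FreeGroup.of GenSym.f2),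
    chainProd 4000 (FreeGroup.of GenSym.f2) (FreeGroup.of GenSym.f1),
    chainProd 1000 (FreeGroup.of GenSym.b) (FreeGroup.of GenSym.f1),
    chainProd 1000 (FreeGroup.of GenSym.b) (FreeGroup.of GenSym.f2),
    chainProd 2000 (FreeGroup.of GenSym.c) (FreeGroup.of GenSym.f1),
    chainProd 2000 (FreeGroup.of GenSym.c) (FreeGroup.of GenSym.f2),
    chainProd 3000 (FreeGroup.of GenSym.d) (FreeGroup.of GenSym.f1),
    chainProd 3000 (FreeGroup.of GenSym.d) (FreeGroup.of GenSym.f2)}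
  ∪ {r | ∃ a : S.A,
      r = chainProd 0 (FreeGroup.of (GenSym.elt a)) (FreeGroup.of GenSym.c) ∨
      r = chainProd 0 (FreeGroup.of (GenSym.elt a)) (FreeGroup.of GenSym.d)}
  ∪ {r | ∃ m, 1 ≤ m ∧ S.isFunc m ∧ ∃ as : Fin (S.arity m) → S.A,
      r = wProd m (fun i => FreeGroup.of (GenSym.elt (as i))) (FreeGroup.of GenSym.b) *
        (FreeGroup.of (GenSym.elt (S.funcInterp m as)))⁻¹}
  ∪ {r | ∃ m, 1 ≤ m ∧ ¬ S.isFunc m ∧ ∃ as : Fin (S.arity m) → S.A,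
      S.relInterp m as ∧
      r = wProd m (fun i => FreeGroup.of (GenSym.elt (as i))) (FreeGroup.of GenSym.b)}

/-- The group `G(𝒜)`, presented on the generators `GenSym A` with relators `grpRels`. -/
abbrev GA (S : IndexedStructure) (p₁ p₂ : ℕ) : Type :=
  PresentedGroup (grpRels S p₁ p₂)

/-- The image in `G(𝒜)` of a generator. -/
def gen (S : IndexedStructure) (p₁ p₂ : ℕ) (g : GenSym S.A) : GA S p₁ p₂ :=
  PresentedGroup.of g

namespace SmallCanc

open FreeGroup

variable {α : Type}

/-- Symmetrised small-cancellation set of words with parameter `1/8`. -/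
structure SC (R : Set (List (α × Bool))) : Prop where
  red : ∀ r ∈ R, IsReduced r
  ne : ∀ r ∈ R, r ≠ []
  rot : ∀ a b, a ++ b ∈ R → b ++ a ∈ R
  inv : ∀ r ∈ R, invRev r ∈ R
  piece : ∀ p q q', p ++ q ∈ R → p ++ q' ∈ R → (p ++ q).length ≤ 8 * p.length → q = q'

theorem SC.piece' {R : Set (List (α × Bool))} (h : SC R) {p q q' : List (α × Bool)}
    (h1 : p ++ q ∈ R) (h2 : p ++ q' ∈ R)
    (h3 : (p ++ q).length ≤ 8 * p.length ∨ (p ++ q').length ≤ 8 * p.length) : q = q' := by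
  rcases h3 with h3 | h3
  · exact h.piece _ _ _ h1 h2 h3
  · exact (h.piece _ _ _ h2 h1 h3).symm

/-- `Ar R n g`: the element `g` of the free group is a product of at most `n` conjugates of
elements of `R`. -/
inductive Ar (R : Set (List (α × Bool))) : ℕ → FreeGroup α → Prop
  | one (n : ℕ) : Ar R n 1
  | step {n : ℕ} {P Q : FreeGroup α} {r : List (α × Bool)} :
      r ∈ R → Ar R n (P * Q) → Ar R (n + 1) (P * mk r * Q)

theorem Ar.ins {R : Set (List (α × Bool))} {n : ℕ} {g h : FreeGroup α} (P Q : FreeGroup α)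
    {r : List (α × Bool)} (h1 : Ar R n g) (hr : r ∈ R) (hg : g = P * Q)
    (hh : h = P * mk r * Q) : Ar R (n + 1) h := by
  subst hg hh
  exact Ar.step hr h1

theorem Ar.insInv {R : Set (List (α × Bool))} (hR : SC R) {n : ℕ} {g h : FreeGroup α}
    (P Q : FreeGroup α)
    {r : List (α × Bool)} (h1 : Ar R n g) (hr : r ∈ R) (hg : g = P * Q)
    (hh : h = P * (mk r)⁻¹ * Q) : Ar R (n + 1) h :=
  Ar.ins P Q h1 (hR.inv r hr) hg (by rw [hh, inv_mk])

theorem Ar.succ {R : Set (List (α × Bool))} {n : ℕ} {g : FreeGroup α} (h : Ar R n g) :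
    Ar R (n + 1) g := by
  induction h with
  | one n => exact Ar.one _
  | step hr _ ih => exact Ar.step hr ih

theorem Ar.mono {R : Set (List (α × Bool))} {n m : ℕ} {g : FreeGroup α} (h : Ar R n g)
    (hnm : n ≤ m) : Ar R m g := by
  induction hnm with
  | refl => exact h
  | step _ ih => exact ih.succ

theorem Ar.zero {R : Set (List (α × Bool))} {g : FreeGroup α} (h : Ar R 0 g) : g = 1 := by
  cases h; rfl

theorem eq_nil_of_reduced {L : List (α × Bool)} (h : IsReduced L) (h1 : mk L = 1) : L = [] := by
  classical
  have := reduce.sound (L₁ := L) (L₂ := []) h1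
  rwa [h.reduce_eq, reduce_nil] at this

theorem red_append {a b : List (α × Bool)} (ha : IsReduced a) (hb : IsReduced b)
    (h : ∀ x ∈ a.getLast?, ∀ y ∈ b.head?, x.1 = y.1 → x.2 = y.2) : IsReduced (a ++ b) := by
  unfold FreeGroup.IsReduced at *
  rw [List.isChain_append]
  exact ⟨ha, hb, h⟩

/-- Extending an occurrence of part of a relator maximally. -/
theorem extend {R : Set (List (α × Bool))} (hR : SC R) : ∀ (n : ℕ) (x u y v : List (α × Bool)),
    v.length = n → IsReduced x → IsReduced y → u ++ v ∈ R →
    ∃ x' a b y' v', x = x' ++ a ∧ y = b ++ y' ∧ (a ++ u ++ b) ++ v' ∈ R ∧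
      (a ++ u ++ b ++ v').length = (u ++ v).length ∧
      mk x' * (mk v')⁻¹ * mk y' = mk x * (mk v)⁻¹ * mk y ∧
      (v' = [] ∨ IsReduced (x' ++ invRev v' ++ y')) := by
  intro n
  induction n with
  | zero =>
    intro x u y v hv hx hy huv
    have hv' : v = [] := List.length_eq_zero_iff.mp hv
    subst hv'
    exact ⟨x, [], [], y, [], by simp, by simp, by simpa using huv, by simp, by simp, Or.inl rfl⟩
  | succ n ih =>
    intro x u y v hv hx hy huv
    have hvr : IsReduced (invRev v) := by
      have := hR.red _ (hR.inv _ huv)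
      rw [invRev_append] at this
      exact this.infix ⟨[], invRev u, by simp⟩
    have hvne : v ≠ [] := by rintro rfl; simp at hv
    by_cases h1 : ∃ x0 v0 c, x = x0 ++ [c] ∧ v = v0 ++ [c]
    · obtain ⟨x0, v0, c, rfl, rfl⟩ := h1
      have hrel : ([c] ++ u) ++ v0 ∈ R := by
        have := hR.rot (u ++ v0) [c] (by simpa using huv)
        simpa using this
      obtain ⟨x', a, b, y', v', e1, e2, e3, e4, e5, e6⟩ := ih x0 ([c] ++ u) y v0
        (by simpa using hv) (hx.infix ⟨[], [c], by simp⟩) hy hrel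
      refine ⟨x', a ++ [c], b, y', v', by simp [e1], e2, by simpa using e3, ?_, ?_, e6⟩
      · simp at e4 ⊢; omega
      · rw [e5]; simp only [← FreeGroup.mul_mk]; group
    · by_cases h2 : ∃ y0 v0 c, y = c :: y0 ∧ v = c :: v0
      · obtain ⟨y0, v0, c, rfl, rfl⟩ := h2
        have hrel : (u ++ [c]) ++ v0 ∈ R := by simpa using huv
        obtain ⟨x', a, b, y', v', e1, e2, e3, e4, e5, e6⟩ := ih x (u ++ [c]) y0 v0
          (by simpa using hv) hx (hy.infix ⟨[c], [], by simp⟩) hrel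
        refine ⟨x', a, c :: b, y', v', e1, by simp [e2], by simpa using e3, ?_, ?_, e6⟩
        · simp at e4 ⊢; omega
        · rw [e5]
          rw [show c :: v0 = [c] ++ v0 from rfl, show c :: y0 = [c] ++ y0 from rfl]
          simp only [← FreeGroup.mul_mk]; group
      · refine ⟨x, [], [], y, v, by simp, by simp, by simpa using huv, by simp, rfl, Or.inr ?_⟩
        have hine : invRev v ≠ [] := by
          intro h; apply hvne
          have := congrArg List.length h
          simpa using this
        apply IsReduced.append_overlap _ _ hine
        · apply red_append hx hvr
          intro c hc d hd hcd
          by_contra hne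
          apply h1
          rcases List.eq_nil_or_concat x with rfl | ⟨x0, c', rfl⟩
          · simp at hc
          rcases List.eq_nil_or_concat v with rfl | ⟨v0, d', rfl⟩
          · exact absurd rfl hvne
          simp at hc
          simp [invRev] at hd
          subst hc hd
          refine ⟨x0, v0, c', by simp, ?_⟩
          have : c' = d' := by
            ext
            · simpa using hcd
            · simp at hne; rw [hne]
          simp [this]
        · apply red_append hvr hy
          intro c hc d hd hcd
          by_contra hne
          apply h2
          cases y with
          | nil => simp at hd
          | cons d' y0 =>
            cases v with
            | nil => exact absurd rfl hvne
            | cons c' v0 =>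
              simp at hd
              simp [invRev] at hc
              subst hc hd
              refine ⟨y0, v0, d', rfl, ?_⟩
              have : c' = d' := by
                ext
                · simpa using hcd
                · simp at hne; rw [← hne]
              simp [this]

/-- The inductive statement: a word of area at most `n` has a large exposed relator part. -/
def Expo (R : Set (List (α × Bool))) (n : ℕ) : Prop :=
  ∀ w : List (α × Bool), IsReduced w → w ≠ [] → Ar R n (mk w) →
    ∃ x u y v, w = x ++ u ++ y ∧ u ++ v ∈ R ∧ 5 * (u ++ v).length ≤ 8 * u.length ∧
      Ar R (n - 1) (mk x * (mk v)⁻¹ * mk y)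

structure St (R : Set (List (α × Bool))) (m : ℕ) (X T V s y : List (α × Bool)) : Prop where
  red : IsReduced (X ++ T ++ V ++ y)
  rel : V ++ s ∈ R
  len : (V ++ s).length ≤ 4 * V.length
  ar : Ar R m (mk (X ++ T ++ V ++ y))
  hd : ∀ j < m, ¬ Ar R j (mk (X ++ T ++ V ++ y))
  hr : ∀ j ≤ m, ¬ Ar R j (mk X * mk T * (mk s)⁻¹ * mk y)
  hN : ∀ X1 X2 r, X = X1 ++ X2 → X2 ≠ [] → r ∈ R → ∀ j < m,
    ¬ Ar R j (mk X1 * mk r * mk (X2 ++ T ++ V ++ y))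
  hb : ∀ y1 u y2 v, y = y1 ++ u ++ y2 → u ++ v ∈ R → 5 * (u ++ v).length ≤ 8 * u.length →
    ∀ j < m, ¬ Ar R j (mk (X ++ T ++ V ++ y1) * (mk v)⁻¹ * mk y2)
  hI : ∀ t1 p t2 q, T ++ V = t1 ++ p ++ t2 → p ++ q ∈ R → (p ++ q).length ≤ 4 * p.length →
    ∀ j < m, ¬ Ar R j (mk (X ++ t1) * (mk q)⁻¹ * mk (t2 ++ y))

/-- one step of the chain argument -/
theorem st_next {R : Set (List (α × Bool))} (hR : SC R) {m : ℕ} {X T V s y : List (α × Bool)}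
    (hE : Expo R (m + 1)) (S : St R (m + 1) X T V s y) :
    ∃ T' V' s' y', St R m X T' V' s' y' := by
  have hVne : V ≠ [] := by
    rintro rfl
    have := S.len
    have h2 := hR.ne _ S.rel
    simp at this
    simp [this] at h2
  obtain ⟨x1, u, y1, v, hw, huv, hlen, har⟩ := hE _ S.red (by simp [hVne]) S.ar
  simp only [Nat.add_sub_cancel] at har
  -- extend maximally
  obtain ⟨x2, a, b, y2, v2, e1, e2, e3, e4, e5, e6⟩ := extend hR _ x1 u y1 v rfl
    (S.red.infix ⟨[], u ++ y1, by rw [hw]; simp⟩) (S.red.infix ⟨x1 ++ u, [], by rw [hw]; simp⟩) huv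
  rw [← e5] at har
  obtain ⟨u2, hu2⟩ : ∃ u2, u2 = a ++ u ++ b := ⟨_, rfl⟩
  rw [← hu2] at e3 e4
  have hlen2 : 5 * (u2 ++ v2).length ≤ 8 * u2.length := by
    rw [e4]
    have : u.length ≤ u2.length := by rw [hu2]; simp; omega
    omega
  have hw2 : X ++ T ++ V ++ y = x2 ++ u2 ++ y2 := by
    rw [hw, e1, e2, hu2]; simp
  clear e5 hw e1 e2 hu2 e4 hlen huv
  clear x1 u y1 v a b
  rename' x2 => x1, u2 => u, y2 => y1, v2 => v, e3 => huv, hlen2 => hlen, hw2 => hw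
  have hinv : invRev (u ++ v) ∈ R := hR.inv _ huv
  -- position of x1
  have hw' : X ++ (T ++ V ++ y) = x1 ++ (u ++ y1) := by simpa using hw
  obtain ⟨x2, rfl, hx2⟩ : ∃ x2, x1 = X ++ x2 ∧ T ++ V ++ y = x2 ++ (u ++ y1) := by
    rcases List.append_eq_append_iff.mp hw' with ⟨x2, h1, h2⟩ | ⟨X2, hX2, hx2⟩
    · exact ⟨x2, h1, h2⟩
    · by_cases hX2n : X2 = []
      · subst hX2n
        exact ⟨[], by simpa using hX2.symm, by simpa using hx2.symm⟩
      · exfalso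
        refine S.hN x1 X2 _ hX2 hX2n hinv m (by omega) ?_
        have : X2 ++ T ++ V ++ y = u ++ y1 := by simpa using hx2.symm
        rw [this]
        convert har using 1
        simp only [← FreeGroup.mul_mk, ← FreeGroup.inv_mk]; group
  -- `x2` ends inside `T ++ V`
  obtain ⟨t2, hTV, ht2⟩ : ∃ t2, T ++ V = x2 ++ t2 ∧ u ++ y1 = t2 ++ y := by
    rcases List.append_eq_append_iff.mp hx2 with ⟨z, h1, h2⟩ | ⟨z, h1, h2⟩
    · exfalso
      refine S.hb z u y1 v (by simpa using h2) huv hlen m (by omega) ?_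
      convert har using 1
      rw [h1]
      simp only [← FreeGroup.mul_mk]; group
    · exact ⟨z, h1, h2⟩
  -- `u` ends inside `y`
  obtain ⟨q, rfl, rfl⟩ : ∃ q, u = t2 ++ q ∧ y = q ++ y1 := by
    rcases List.append_eq_append_iff.mp ht2 with ⟨z, h1, h2⟩ | ⟨z, h1, h2⟩
    · exfalso
      refine S.hI x2 u z v (by rw [hTV, h1]; simp) huv (by omega) m (by omega) ?_
      convert har using 1
      rw [h2]
    · exact ⟨z, h1, h2⟩
  -- `t2` is a proper suffix of `V`
  obtain ⟨V1, rfl, rfl⟩ : ∃ V1, V = V1 ++ t2 ∧ x2 = T ++ V1 := by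
    rcases List.append_eq_append_iff.mp hTV with ⟨z, h1, h2⟩ | ⟨z, h1, h2⟩
    · exact ⟨z, h2, h1⟩
    · exfalso
      subst h1 h2
      have hs : s = q ++ v ++ z := by
        apply hR.piece' S.rel (p := V)
        · have := hR.rot z (V ++ q ++ v) (by simpa using huv)
          simpa using this
        · left; have := S.len; omega
      refine S.hr m (by omega) ?_
      convert har using 1
      rw [hs]
      simp only [← FreeGroup.mul_mk]; group
  have hrelt : t2 ++ (s ++ V1) ∈ R := by
    have := hR.rot V1 (t2 ++ s) (by simpa using S.rel)
    simpa using this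
  have hrelu : t2 ++ (q ++ v) ∈ R := by simpa using huv
  have hneq : s ++ V1 ≠ q ++ v := by
    intro h
    refine S.hr m (by omega) ?_
    convert har using 1
    have h' := congrArg FreeGroup.mk h
    simp only [← FreeGroup.mul_mk] at h' ⊢
    rw [eq_mul_inv_of_mul_eq h']; group
  have hp1 : 8 * t2.length < (t2 ++ (s ++ V1)).length := by
    by_contra hc
    exact hneq (hR.piece' hrelt hrelu (Or.inl (by omega)))
  have hp2 : 8 * t2.length < (t2 ++ (q ++ v)).length := by
    by_contra hc
    exact hneq (hR.piece' hrelt hrelu (Or.inr (by omega)))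
  have hq : 8 * q.length < 5 * (q ++ v ++ t2).length := by
    by_contra hc
    refine S.hb [] q y1 (v ++ t2) (by simp) ?_ ?_ m (by omega) ?_
    · simpa using hR.rot t2 (q ++ v) hrelu
    · simp at hc ⊢; omega
    · convert har using 1
      simp only [← FreeGroup.mul_mk, List.append_nil]; group
  have hv4 : (t2 ++ q ++ v).length < 4 * v.length := by
    simp only [List.length_append] at *; omega
  have hvne : v ≠ [] := by rintro rfl; simp at hv4
  have hlenV := S.len
  have hV1 : (V1 ++ t2 ++ s).length < 8 * V1.length := by
    simp only [List.length_append] at *; omega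
  have hred : IsReduced (X ++ (T ++ V1) ++ invRev v ++ y1) := by
    rcases e6 with h | h
    · exact absurd h hvne
    · exact h
  have hrelv : invRev v ++ invRev (t2 ++ q) ∈ R := by rw [← invRev_append]; exact hinv
  have hold : ∀ j < m, ¬ Ar R j (mk (X ++ (T ++ V1) ++ invRev v ++ y1)) := by
    intro j hj h
    refine S.hd (j + 1) (by omega) ?_
    refine Ar.ins (mk (X ++ (T ++ V1))) (mk (invRev v ++ y1)) h huv ?_ ?_
    · simp only [← FreeGroup.mul_mk, ← FreeGroup.inv_mk]; group
    · simp only [← FreeGroup.mul_mk, ← FreeGroup.inv_mk]; group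
  refine ⟨T ++ V1, invRev v, invRev (t2 ++ q), y1, hred, hrelv, ?_, ?_, hold, ?_, ?_, ?_, ?_⟩
  · simp only [List.length_append, invRev_length] at *; omega
  · convert har using 1
    simp only [← FreeGroup.mul_mk, ← FreeGroup.inv_mk]
  · intro j hj h
    refine S.hd j (by omega) ?_
    convert h using 1
    simp only [← FreeGroup.mul_mk, ← FreeGroup.inv_mk]; group
  · intro X1 X2 r hX hX2 hr j hj h
    refine S.hN X1 X2 r hX hX2 hr (j + 1) (by omega) ?_
    refine Ar.ins (mk X1 * mk r * mk (X2 ++ (T ++ V1))) (mk (invRev v ++ y1)) h huv ?_ ?_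
    · simp only [← FreeGroup.mul_mk, ← FreeGroup.inv_mk]; group
    · simp only [← FreeGroup.mul_mk, ← FreeGroup.inv_mk]; group
  · intro z1 u' z2 v' hz hu' hl j hj h
    subst hz
    refine S.hb (q ++ z1) u' z2 v' (by simp) hu' hl (j + 1) (by omega) ?_
    refine Ar.ins (mk (X ++ (T ++ V1))) (mk (invRev v ++ z1) * (mk v')⁻¹ * mk z2) h huv ?_ ?_
    · simp only [← FreeGroup.mul_mk, ← FreeGroup.inv_mk]; group
    · simp only [← FreeGroup.mul_mk, ← FreeGroup.inv_mk]; group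
  · intro t1 p t3 q2 hsplit hpq hl j hj h
    have hsplit' : (T ++ V1) ++ invRev v = t1 ++ (p ++ t3) := by simpa using hsplit
    rcases List.append_eq_append_iff.mp hsplit' with ⟨c, rfl, h2⟩ | ⟨p', h1, h2⟩
    · -- `p` lies in the new part
      have hq2 : q2 = t3 ++ invRev (t2 ++ q) ++ c := by
        apply hR.piece' hpq (p := p)
        · rw [h2] at hrelv
          have := hR.rot c (p ++ t3 ++ invRev (t2 ++ q)) (by simpa using hrelv)
          simpa using this
        · left; omega
      refine S.hd j (by omega) ?_
      convert h using 1
      rw [hq2]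
      simp only [← FreeGroup.mul_mk, ← FreeGroup.inv_mk]; group
    · rcases List.append_eq_append_iff.mp h2 with ⟨z, h3, h4⟩ | ⟨p2, h3, h4⟩
      · -- `p` lies in the old part
        subst h3
        refine S.hI t1 p (z ++ t2) q2 ?_ hpq hl (j + 1) (by omega) ?_
        · rw [← List.append_assoc, h1]; simp
        · refine Ar.ins (mk (X ++ t1) * (mk q2)⁻¹ * mk z) (mk (invRev v ++ y1)) h huv ?_ ?_
          · rw [h4]
            simp only [← FreeGroup.mul_mk, ← FreeGroup.inv_mk]; group
          · simp only [← FreeGroup.mul_mk, ← FreeGroup.inv_mk]; group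
      · -- `p` straddles
        subst h3
        rename' p' => p1
        have hvm : (mk v)⁻¹ = mk p2 * mk t3 := by rw [inv_mk, h4, mul_mk]
        by_cases hp2' : (p1 ++ p2 ++ q2).length ≤ 8 * p2.length
        · have hq2 : q2 ++ p1 = t3 ++ invRev (t2 ++ q) := by
            apply hR.piece' (p := p2)
            · have := hR.rot p1 (p2 ++ q2) (by simpa using hpq)
              simpa using this
            · rw [h4] at hrelv; simpa using hrelv
            · left; simp only [List.length_append] at *; omega
          refine S.hd j (by omega) ?_
          convert h using 1
          have h' := congrArg FreeGroup.mk hq2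
          have h1' := congrArg FreeGroup.mk h1
          simp only [← FreeGroup.mul_mk, ← FreeGroup.inv_mk] at h' h1' ⊢
          rw [eq_mul_inv_of_mul_eq h']
          have : mk T = mk t1 * mk p1 * (mk V1)⁻¹ := eq_mul_inv_of_mul_eq h1'
          rw [this]
          group
        · have hp1' : (p1 ++ p2 ++ q2).length ≤ 8 * p1.length := by
            simp only [List.length_append] at *; omega
          -- the key identity
          have key : ∃ g, mk t1 = mk T * g ∧ mk p2 * mk q2 = mk t2 * mk s * g := by
            rcases List.append_eq_append_iff.mp h1 with ⟨z, h5, h6⟩ | ⟨z, h5, h6⟩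
            · refine ⟨mk z, by rw [h5, mul_mk], ?_⟩
              subst h6
              have : p2 ++ q2 = t2 ++ s ++ z := by
                apply hR.piece' (p := p1)
                · simpa using hpq
                · have := hR.rot z (p1 ++ t2 ++ s) (by simpa using S.rel)
                  simpa using this
                · left; simp only [List.length_append] at *; omega
              simp only [FreeGroup.mul_mk, this]
            · refine ⟨(mk z)⁻¹, by rw [h5, ← mul_mk]; group, ?_⟩
              subst h6
              have : p2 ++ q2 ++ z = t2 ++ s := by
                apply hR.piece' (p := V1)
                · have := hR.rot z (V1 ++ p2 ++ q2) (by simpa using hpq)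
                  simpa using this
                · simpa using S.rel
                · right; simp only [List.length_append] at *; omega
              have h' := congrArg FreeGroup.mk this
              simp only [← FreeGroup.mul_mk] at h' ⊢
              exact eq_mul_inv_of_mul_eq h'
          obtain ⟨g, hg1, hg2⟩ := key
          refine S.hr (j + 1) (by omega) ?_
          refine Ar.ins (mk X * mk T * (mk s)⁻¹ * (mk t2)⁻¹) (mk (invRev v ++ y1)) h huv ?_ ?_
          · have : mk q2 = (mk p2)⁻¹ * (mk t2 * mk s * g) := by rw [← hg2]; group
            simp only [← FreeGroup.mul_mk, ← FreeGroup.inv_mk]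
            rw [this, hg1, hvm]; group
          · simp only [← FreeGroup.mul_mk, ← FreeGroup.inv_mk]; group

theorem st_false {R : Set (List (α × Bool))} (hR : SC R) : ∀ (m : ℕ) (X T V s y : List (α × Bool)),
    (∀ j ≤ m, Expo R j) → ¬ St R m X T V s y := by
  intro m
  induction m with
  | zero =>
    intro X T V s y _ S
    have h1 := eq_nil_of_reduced S.red S.ar.zero
    have h2 : V = [] := by simp at h1; tauto
    subst h2
    have h3 := S.len
    have h4 := hR.ne _ S.rel
    simp at h3
    simp [h3] at h4
  | succ m ih =>
    intro X T V s y hE S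
    obtain ⟨T', V', s', y', S'⟩ := st_next hR (hE _ le_rfl) S
    exact ih _ _ _ _ _ (fun j hj => hE j (by omega)) S'

end SmallCanc

namespace SmallCanc

open FreeGroup

variable {α : Type}

theorem length_toWord_lt [DecidableEq α] {L : List (α × Bool)} (h : ¬ IsReduced L) :
    (toWord (mk L)).length < L.length := by
  have h1 : (toWord (mk L)).length ≤ L.length := norm_mk_le
  refine lt_of_le_of_ne h1 fun h2 => h ?_
  have h3 : (reduce L).Sublist L := by
    have := (reduce.red (L := L)).sublist
    exact this
  rw [toWord_mk] at h2
  have := h3.eq_of_length h2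
  rw [← this, ← toWord_mk]
  exact isReduced_toWord

theorem eq_of_mk_eq {L L' : List (α × Bool)} (h : IsReduced L) (h' : IsReduced L')
    (e : mk L = mk L') : L = L' := by
  classical
  have := reduce.sound e
  rwa [h.reduce_eq, h'.reduce_eq] at this

theorem mk_nil : (mk [] : FreeGroup α) = 1 := rfl

theorem expo_all {R : Set (List (α × Bool))} (hR : SC R) (n : ℕ) : Expo R n := by
  classical
  induction n using Nat.strong_induction_on with
  | _ n ih =>
  intro w hw hwne har
  by_cases hlow : ∃ j < n, Ar R j (mk w)
  · obtain ⟨j, hj, hj'⟩ := hlow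
    obtain ⟨x, u, y, v, h1, h2, h3, h4⟩ := ih j hj w hw hwne hj'
    exact ⟨x, u, y, v, h1, h2, h3, h4.mono (by omega)⟩
  push Not at hlow
  by_contra hno
  obtain ⟨k, rfl⟩ : ∃ k, n = k + 1 := by
    cases n with
    | zero => exact absurd (eq_nil_of_reduced hw har.zero) hwne
    | succ k => exact ⟨k, rfl⟩
  simp only [Nat.add_sub_cancel] at hno
  -- triples
  let Tri : List (α × Bool) → List (α × Bool) → Prop := fun X Y =>
    mk X * mk Y = mk w ∧ ∃ r ∈ R, Ar R k (mk X * (mk r)⁻¹ * mk Y)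
  have hex : ∃ X Y, IsReduced X ∧ IsReduced Y ∧ Tri X Y := by
    generalize hg : mk w = g at har
    cases har with
    | one => exact absurd (eq_nil_of_reduced hw hg) hwne
    | @step _ P Q r hr h =>
      refine ⟨toWord (P * mk r), toWord Q, isReduced_toWord, isReduced_toWord, ?_, r, hr, ?_⟩
      · rw [mk_toWord, mk_toWord, hg]
      · rw [mk_toWord, mk_toWord]
        convert h using 1
        group
  have hex1 : ∃ N, ∃ X Y, IsReduced X ∧ IsReduced Y ∧ Tri X Y ∧ X.length + Y.length = N := by
    obtain ⟨X, Y, h1, h2, h3⟩ := hex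
    exact ⟨_, X, Y, h1, h2, h3, rfl⟩
  have hex2 : ∃ l, ∃ X Y, IsReduced X ∧ IsReduced Y ∧ Tri X Y ∧
      X.length + Y.length = Nat.find hex1 ∧ X.length = l := by
    obtain ⟨X, Y, h1, h2, h3, h4⟩ := Nat.find_spec hex1
    exact ⟨_, X, Y, h1, h2, h3, h4, rfl⟩
  obtain ⟨X, Y, hX, hY, hTri, hN, hl⟩ := Nat.find_spec hex2
  have tw : ∀ L : List (α × Bool), (toWord (mk L)).length ≤ L.length := fun L => norm_mk_le
  have hmin1 : ∀ X' Y', Tri X' Y' → X.length + Y.length ≤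
      (toWord (mk X')).length + (toWord (mk Y')).length := by
    intro X' Y' h
    rw [hN]
    apply Nat.find_min' hex1
    refine ⟨toWord (mk X'), toWord (mk Y'), isReduced_toWord, isReduced_toWord, ?_, rfl⟩
    simpa only [Tri, mk_toWord] using h
  have hmin2 : ∀ X' Y', Tri X' Y' → X'.length + Y'.length ≤ X.length + Y.length →
      X.length ≤ X'.length := by
    intro X' Y' h h'
    have h1 := hmin1 X' Y' h
    have h2 := tw X'
    have h3 := tw Y'
    rw [hl]
    refine le_trans (Nat.find_min' hex2 ⟨toWord (mk X'), toWord (mk Y'), isReduced_toWord,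
      isReduced_toWord, ?_, ?_, rfl⟩) h2
    · simpa only [Tri, mk_toWord] using h
    · omega
  have hmin1' : ∀ X' Y', Tri X' Y' → X'.length + Y'.length ≤ X.length + Y.length →
      IsReduced X' := by
    intro X' Y' h h'
    by_contra hc
    have h1 := hmin1 X' Y' h
    have h2 := length_toWord_lt hc
    have h3 := tw Y'
    omega
  obtain ⟨hXY, r, hr, hAr⟩ := hTri
  have hnoY : ∀ y1 u y2 v, Y = y1 ++ u ++ y2 → u ++ v ∈ R →
      5 * (u ++ v).length ≤ 8 * u.length → ¬ Ar R k (mk X * mk y1 * (mk v)⁻¹ * mk y2) := by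
    intro y1 u y2 v e huv hlen h
    by_cases hred : IsReduced (X ++ Y)
    · have := eq_of_mk_eq hred hw (by rw [← mul_mk, hXY])
      refine hno ⟨X ++ y1, u, y2, v, by rw [← this, e]; simp, huv, hlen, ?_⟩
      rw [← mul_mk]; exact h
    · have hune : u ≠ [] := by
        rintro rfl
        have := hR.ne _ huv
        simp at hlen
        simp [hlen] at this
      have hx := hmin1' (X ++ (y1 ++ u)) y2 ⟨?_, v ++ u, hR.rot _ _ huv, ?_⟩ ?_
      · apply hred
        rw [e] at hY ⊢
        have := IsReduced.append_overlap hx hY (by simp [hune])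
        simpa using this
      · rw [← hXY, e]; simp only [← FreeGroup.mul_mk]; group
      · convert h using 1
        simp only [← FreeGroup.mul_mk]; group
      · rw [e]; simp; omega
  obtain ⟨X', a, b, Y', t, e1, e2, e3, e4, e5, e6⟩ := extend hR _ X [] Y r rfl hX hY (by simpa using hr)
  rw [List.append_nil] at e3
  have hAr' := hAr
  rw [← e5] at hAr'
  have ha : a = [] := by
    have := hmin2 X' (a ++ Y) ⟨?_, a ++ b ++ t, e3, ?_⟩ ?_
    · rw [e1] at this; simpa using this
    · rw [← hXY, e1]; simp only [← FreeGroup.mul_mk]; group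
    · convert hAr' using 1
      rw [e2]; simp only [← FreeGroup.mul_mk]; group
    · rw [e1]; simp; omega
  subst ha
  simp only [List.append_nil, List.nil_append] at e1 e3
  subst e1
  have hblen : 8 * b.length < 5 * (b ++ t).length := by
    by_contra hc
    refine hnoY [] b Y' t (by simpa using e2) e3 (by omega) ?_
    simpa [mk_nil] using hAr'
  have htne : t ≠ [] := by
    rintro rfl
    simp at hblen
    omega
  have hred : IsReduced (X ++ invRev t ++ Y') := e6.resolve_left htne
  have hwb : mk X * mk b * mk Y' = mk w := by rw [← hXY, e2, ← mul_mk]; group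
  have hnw : ∀ j ≤ k, ¬ Ar R j (mk w) := fun j hj => hlow j (by omega)
  have hrel : invRev t ++ invRev b ∈ R := by rw [← invRev_append]; exact hR.inv _ e3
  refine st_false hR k X [] (invRev t) (invRev b) Y' (fun j hj => ih j (by omega)) ?_
  refine ⟨by simpa using hred, hrel, ?_, ?_, ?_, ?_, ?_, ?_, ?_⟩
  · simp only [List.length_append, invRev_length] at *; omega
  · convert hAr' using 1
    simp only [← FreeGroup.mul_mk, ← FreeGroup.inv_mk, mk_nil]; group
  · intro j hj h
    refine hnw (j + 1) (by omega) ?_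
    refine Ar.ins (mk X) (mk (invRev t ++ Y')) h e3 ?_ ?_
    · simp only [← FreeGroup.mul_mk, ← FreeGroup.inv_mk, mk_nil]; group
    · rw [← hwb]; simp only [← FreeGroup.mul_mk, ← FreeGroup.inv_mk]; group
  · intro j hj h
    refine hnw j hj ?_
    convert h using 1
    rw [← hwb]; simp only [← FreeGroup.inv_mk, mk_nil]; group
  · intro X1 X2 r0 hX12 hX2 hr0 j hj h
    have := hmin2 X1 (X2 ++ Y) ⟨?_, invRev r0, hR.inv _ hr0, ?_⟩ ?_
    · rw [hX12] at this
      simp at this; exact hX2 this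
    · rw [← hXY, hX12]; simp only [← FreeGroup.mul_mk]; group
    · refine (Ar.ins (mk X1 * mk r0 * mk X2) (mk (invRev t ++ Y')) h e3 ?_ ?_).mono
        (show j + 1 ≤ k by omega)
      · simp only [← FreeGroup.mul_mk, ← FreeGroup.inv_mk, mk_nil]; group
      · rw [e2]; simp only [← FreeGroup.mul_mk, ← FreeGroup.inv_mk]; group
    · rw [hX12]; simp; omega
  · intro y1 u y2 v e huv hlen j hj h
    refine hnoY (b ++ y1) u y2 v (by rw [e2, e]; simp) huv hlen ?_
    refine (Ar.ins (mk X) (mk (invRev t) * mk y1 * (mk v)⁻¹ * mk y2) h e3 ?_ ?_).mono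
        (show j + 1 ≤ k by omega)
    · simp only [← FreeGroup.mul_mk, ← FreeGroup.inv_mk, mk_nil]; group
    · simp only [← FreeGroup.mul_mk, ← FreeGroup.inv_mk]; group
  · intro t1 p t2 q e hpq hlen j hj h
    have hq : q = t2 ++ invRev b ++ t1 := by
      apply hR.piece' hpq (p := p)
      · rw [List.nil_append] at e
        rw [e] at hrel
        have := hR.rot t1 (p ++ t2 ++ invRev b) (by simpa using hrel)
        simpa using this
      · left; omega
    refine hnw j (by omega) ?_
    convert h using 1
    rw [← hwb, hq]
    simp only [← FreeGroup.mul_mk, ← FreeGroup.inv_mk]; group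

theorem dehn {R : Set (List (α × Bool))} (hR : SC R) {w : List (α × Bool)} (hw : IsReduced w)
    (hne : w ≠ []) {n : ℕ} (h : Ar R n (mk w)) :
    ∃ x u y v, w = x ++ u ++ y ∧ u ++ v ∈ R ∧ 5 * (u ++ v).length ≤ 8 * u.length := by
  obtain ⟨x, u, y, v, h1, h2, h3, _⟩ := expo_all hR n w hw hne h
  exact ⟨x, u, y, v, h1, h2, h3⟩

end SmallCanc

namespace SmallCanc

open FreeGroup

variable {α : Type}

theorem mk_rep (w : List (α × Bool)) (k : ℕ) :
    mk (List.replicate k w).flatten = (mk w) ^ k := by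
  induction k with
  | zero => simp [mk_nil]
  | succ k ih => rw [List.replicate_succ, List.flatten_cons, ← mul_mk, ih, pow_succ']

theorem suffix_pow {β : Type} (w : List β) : ∀ (k : ℕ) (x z : List β),
    (List.replicate k w).flatten = x ++ z →
    ∃ c d j, w = c ++ d ∧ z = d ++ (List.replicate j w).flatten := by
  intro k
  induction k with
  | zero =>
    intro x z h
    simp at h
    exact ⟨w, [], 0, by simp, by simp [h]⟩
  | succ k ih =>
    intro x z h
    rw [List.replicate_succ, List.flatten_cons] at h
    rcases List.append_eq_append_iff.mp h with ⟨x', h1, h2⟩ | ⟨z', h1, h2⟩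
    · exact ih x' z h2
    · exact ⟨x, z', k, h1, h2⟩

theorem rot_pow {β : Type} (c d : List β) (j : ℕ) :
    d ++ (List.replicate j (c ++ d)).flatten ++ c = (List.replicate (j + 1) (d ++ c)).flatten := by
  induction j with
  | zero => simp
  | succ j ih =>
    rw [List.replicate_succ (n := j + 1), List.flatten_cons, ← ih, List.replicate_succ,
      List.flatten_cons]
    simp

theorem pow_succ_right {β : Type} (w : List β) (j : ℕ) :
    (List.replicate (j + 1) w).flatten = (List.replicate j w).flatten ++ w := by
  have := rot_pow (c := w) (d := []) j
  simpa using this.symm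

theorem torsion {R : Set (List (α × Bool))} (hR : SC R) {G : Type} [Group G]
    (φ : FreeGroup α →* G) (hφ : Function.Surjective φ)
    (hker : ∀ g, φ g = 1 ↔ ∃ n, Ar R n g) {x : G} {k : ℕ} (hk : 1 ≤ k) (hx : x ^ k = 1)
    (hx1 : x ≠ 1) :
    ∃ a b g, a ≠ [] ∧ b ≠ [] ∧ a ++ b ∈ R ∧ a ++ b = b ++ a ∧ x = g * φ (mk a) * g⁻¹ := by
  classical
  let P : List (α × Bool) → Prop := fun w => ∃ g, x = g * φ (mk w) * g⁻¹
  have hex : ∃ l, ∃ w, P w ∧ w.length = l := by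
    obtain ⟨g, hg⟩ := hφ x
    exact ⟨_, toWord g, ⟨1, by rw [mk_toWord, hg]; simp⟩, rfl⟩
  obtain ⟨w, hPw, hwl⟩ := Nat.find_spec hex
  have hmin : ∀ w', P w' → w.length ≤ w'.length := by
    intro w' h
    rw [hwl]
    exact Nat.find_min' hex ⟨w', h, rfl⟩
  have hrot : ∀ a b, P (a ++ b) → P (b ++ a) := by
    rintro a b ⟨g, hg⟩
    refine ⟨g * φ (mk a), ?_⟩
    rw [hg, ← mul_mk, ← mul_mk]; simp only [MonoidHom.map_mul]; group
  have hrel : ∀ a b, a ++ b ∈ R → φ (mk a) = φ (mk (invRev b)) := by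
    intro a b h
    have : φ (mk (a ++ b)) = 1 := by
      rw [hker]
      exact ⟨1, Ar.ins 1 1 (Ar.one 0) h (by simp) (by simp)⟩
    rw [← mul_mk, MonoidHom.map_mul] at this
    rw [← inv_mk, MonoidHom.map_inv]
    exact eq_inv_of_mul_eq_one_left this
  have hredm : ∀ w', P w' → w'.length ≤ w.length → IsReduced w' := by
    intro w' h hl
    by_contra hc
    have h1 := length_toWord_lt hc
    have h2 := hmin (toWord (mk w')) (by simpa only [P, mk_toWord] using h)
    omega
  have hwne : w ≠ [] := by
    rintro rfl
    obtain ⟨g, hg⟩ := hPw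
    apply hx1
    rw [hg, mk_nil]; simp
  have hcyc : IsCyclicallyReduced w := by
    refine ⟨hredm w hPw le_rfl, ?_⟩
    obtain ⟨c, w', rfl⟩ := List.exists_cons_of_ne_nil hwne
    have h1 : IsReduced (w' ++ [c]) := hredm _ (hrot [c] w' hPw) (by simp)
    intro a ha b hb
    simp only [List.head?_cons, Option.mem_def, Option.some.injEq] at hb
    subst hb
    rcases List.eq_nil_or_concat w' with rfl | ⟨v, d, rfl⟩
    · simp at ha; rw [ha]; simp
    · rw [List.concat_eq_append, ← List.cons_append, List.getLast?_concat] at ha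
      simp at ha
      subst ha
      have : IsReduced [d, c] := h1.infix ⟨v, [], by simp⟩
      simpa [FreeGroup.IsReduced] using this
  have hwk : IsReduced (List.replicate k w).flatten := hcyc.flatten_replicate k |>.isReduced
  obtain ⟨n, hn⟩ : ∃ n, Ar R n (mk (List.replicate k w).flatten) := by
    rw [← hker, mk_rep, map_pow]
    obtain ⟨g, hg⟩ := hPw
    have : φ (mk w) = g⁻¹ * x * g := by rw [hg]; group
    rw [this]
    have := conj_pow (i := k) (a := g⁻¹) (b := x)
    rw [inv_inv] at this
    rw [this, hx]; simp
  have hkne : (List.replicate k w).flatten ≠ [] := by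
    obtain ⟨k', rfl⟩ : ∃ k', k = k' + 1 := ⟨k - 1, by omega⟩
    rw [List.replicate_succ]; simp [hwne]
  obtain ⟨x1, u, y1, v, e1, huv, hlen⟩ := dehn hR hwk hkne hn
  have hune : u ≠ [] := by
    rintro rfl
    have := hR.ne _ huv
    simp at hlen
    simp [hlen] at this
  have hul : 0 < u.length := List.length_pos_iff.mpr hune
  obtain ⟨c, d, j, rfl, e2⟩ := suffix_pow w k x1 (u ++ y1) (by simpa using e1)
  have hPdc := hrot _ _ hPw
  have e3 : u ++ (y1 ++ c) = (List.replicate (j + 1) (d ++ c)).flatten := by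
    rw [← rot_pow, ← e2]; simp
  have hml : ∀ w', P w' → (d ++ c).length ≤ w'.length := by
    intro w' h
    have := hmin w' h
    simp at this ⊢; omega
  obtain ⟨w', hw'⟩ : ∃ w', w' = d ++ c := ⟨_, rfl⟩
  rw [← hw'] at hPdc e3 hml
  have e4 := e3
  rw [List.replicate_succ, List.flatten_cons] at e4
  simp only [List.length_append] at hlen
  rcases List.append_eq_append_iff.mp e4 with ⟨t, h1, h2⟩ | ⟨u', h1, h2⟩
  · exfalso
    have : P (invRev v ++ t) := by
      obtain ⟨g, hg⟩ := hPdc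
      refine ⟨g, ?_⟩
      rw [hg, h1, ← mul_mk, ← mul_mk, MonoidHom.map_mul, MonoidHom.map_mul, hrel u v huv]
    have := hml _ this
    rw [h1] at this
    simp at this
    omega
  · by_cases hu'n : u' = []
    · exfalso
      subst hu'n
      rw [List.append_nil] at h1
      subst h1
      have : P (invRev v) := by
        obtain ⟨g, hg⟩ := hPdc
        exact ⟨g, by rw [hg, hrel u v huv]⟩
      have := hml _ this
      simp at this
      omega
    have hpre : u' <+: u := by
      apply List.prefix_of_prefix_length_le (l₃ := (List.replicate (j + 1) w').flatten)
      · rw [pow_succ_right, h2]; simp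
      · rw [← e3]; simp
      · rw [h1]; simp
    obtain ⟨u'', h3⟩ := hpre
    have hr1 : w' ++ (u' ++ v) ∈ R := by rw [h1] at huv; simpa using huv
    have hr2 : u' ++ (v ++ w') ∈ R := by simpa using hR.rot _ _ hr1
    have hr3 : u' ++ (u'' ++ v) ∈ R := by rw [← h3] at huv; simpa using huv
    have hlu : u.length = w'.length + u'.length := by rw [h1]; simp
    by_cases hp : (u' ++ (v ++ w')).length ≤ 8 * u'.length
    · have hq := hR.piece _ _ _ hr2 hr3 hp
      obtain ⟨g, hg⟩ := hPdc
      refine ⟨w', u' ++ v, g, ?_, by simp [hu'n], hr1, ?_, hg⟩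
      · rintro rfl
        obtain ⟨g, hg⟩ := (⟨g, hg⟩ : P [])
        apply hx1
        rw [hg, mk_nil]; simp
      · rw [List.append_assoc u' v, hq, ← List.append_assoc, ← List.append_assoc, ← h1, h3]
    · exfalso
      have : P (invRev (u' ++ v)) := by
        obtain ⟨g, hg⟩ := hPdc
        exact ⟨g, by rw [hg, hrel _ _ hr1]⟩
      have := hml _ this
      simp at this hp
      omega

end SmallCanc

namespace SmallCanc

open FreeGroup

section Blocks

variable {β : Type}

/-- The word spelled by a list of blocks `(X, e)`, each contributing `X y^e`. -/
def blockWord (y : β) (L : List (List β × ℕ)) : List β :=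
  L.flatMap fun B => B.1 ++ List.replicate B.2 y

theorem blockWord_append (y : β) (L L' : List (List β × ℕ)) :
    blockWord y (L ++ L') = blockWord y L ++ blockWord y L' := by
  simp [blockWord]

theorem blockWord_cons (y : β) (B : List β × ℕ) (L : List (List β × ℕ)) :
    blockWord y (B :: L) = B.1 ++ List.replicate B.2 y ++ blockWord y L := by
  simp [blockWord]

theorem blockWord_split (y : β) : ∀ (L : List (List β × ℕ)) (a b : List β),
    blockWord y L = a ++ b → b ≠ [] →
    ∃ L1 B L2 a' b', L = L1 ++ B :: L2 ∧ B.1 ++ List.replicate B.2 y = a' ++ b' ∧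
      a = blockWord y L1 ++ a' ∧ b = b' ++ blockWord y L2 ∧ b' ≠ [] := by
  intro L
  induction L with
  | nil =>
    intro a b h hb
    simp [blockWord] at h
    exact absurd h.2 hb
  | cons B L ih =>
    intro a b h hb
    rw [blockWord_cons] at h
    rcases List.append_eq_append_iff.mp h with ⟨a'', h1, h2⟩ | ⟨b'', h1, h2⟩
    · obtain ⟨L1, B1, L2, a', b', e1, e2, e3, e4, e5⟩ := ih a'' b h2 hb
      refine ⟨B :: L1, B1, L2, a', b', by simp [e1], e2, ?_, e4, e5⟩
      rw [h1, e3, blockWord_cons]; simp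
    · by_cases hb'' : b'' = []
      · subst hb''
        obtain ⟨L1, B1, L2, a', b', e1, e2, e3, e4, e5⟩ := ih [] b (by simpa using h2.symm) hb
        refine ⟨B :: L1, B1, L2, a', b', by simp [e1], e2, ?_, e4, e5⟩
        rw [blockWord_cons]
        rw [List.append_nil] at h1
        rw [← h1, List.append_assoc, ← e3]; simp
      · exact ⟨[], B, L, a, b'', by simp, h1, by simp [blockWord], h2, hb''⟩

theorem blockWord_start {y : β} {L : List (List β × ℕ)} {a b : List β} {z : β} {s : List β}
    (h : blockWord y L = a ++ b) (hb : b ≠ []) (hs : b ++ a = z :: s) (hz : z ≠ y) :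
    ∃ L1 A X2 e L2, L = L1 ++ (A ++ z :: X2, e) :: L2 ∧ a = blockWord y L1 ++ A ∧
      s = X2 ++ List.replicate e y ++ blockWord y (L2 ++ L1) ++ A := by
  obtain ⟨L1, ⟨X, e⟩, L2, a', b', e1, e2, e3, e4, e5⟩ := blockWord_split y L a b h hb
  obtain ⟨z', b'', rfl⟩ := List.exists_cons_of_ne_nil e5
  subst e3 e4
  simp only [List.cons_append, List.cons.injEq] at hs
  obtain ⟨rfl, hs⟩ := hs
  simp only at e2
  rcases List.append_eq_append_iff.mp e2 with ⟨t, h1, h2⟩ | ⟨t, h1, h2⟩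
  · have : z' ∈ List.replicate e y := by rw [h2]; simp
    exact absurd (List.eq_of_mem_replicate this) hz
  · cases t with
    | nil =>
      have : z' ∈ List.replicate e y := by rw [List.nil_append] at h2; rw [← h2]; simp
      exact absurd (List.eq_of_mem_replicate this) hz
    | cons t0 t =>
      simp only [List.cons_append, List.cons.injEq] at h2
      obtain ⟨rfl, rfl⟩ := h2
      subst h1
      refine ⟨L1, a', t, e, L2, e1, rfl, ?_⟩
      rw [← hs, blockWord_append]; simp

/-- Blocks are legal for the power letter `y`. -/
def BlocksOK (y : β) (L : List (List β × ℕ)) : Prop :=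
  ∀ B ∈ L, B.1 ≠ [] ∧ y ∉ B.1 ∧ 1 ≤ B.2

theorem prefix_unique {y : β} : ∀ {X X' s s' : List β}, y ∉ X → y ∉ X' →
    X ++ y :: s = X' ++ y :: s' → X = X' := by
  intro X
  induction X with
  | nil =>
    intro X' s s' _ h' h
    cases X' with
    | nil => rfl
    | cons c X' => simp at h h'; exact absurd h.1 h'.1
  | cons c X ih =>
    intro X' s s' h1 h' h
    cases X' with
    | nil => simp at h h1; exact absurd h.1.symm h1.1
    | cons c' X' =>
      simp at h h1 h'
      rw [h.1, ih h1.2 h'.2 h.2]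

theorem pow_unique {y c c' : β} (hc : c ≠ y) (hc' : c' ≠ y) : ∀ {e e' : ℕ} {s s' : List β},
    List.replicate e y ++ c :: s = List.replicate e' y ++ c' :: s' → e = e' := by
  intro e
  induction e with
  | zero =>
    intro e' s s' h
    cases e' with
    | zero => rfl
    | succ e' => simp [List.replicate_succ] at h; exact absurd h.1 hc
  | succ e ih =>
    intro e' s s' h
    cases e' with
    | zero => simp [List.replicate_succ] at h; exact absurd h.1.symm hc'
    | succ e' =>
      simp only [List.replicate_succ, List.cons_append, List.cons.injEq, true_and] at h
      rw [ih h]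

theorem blockWord_locate {y : β} {L : List (List β × ℕ)} {a b : List β} {z : β}
    {X' s : List β} {e0 : ℕ} (hL : BlocksOK y L) (hL2 : 2 ≤ L.length)
    (h : blockWord y L = a ++ b) (hb : b ≠ [])
    (hs : b ++ a = z :: (List.replicate e0 y ++ X' ++ y :: s)) (hz : z ≠ y)
    (he0 : 1 ≤ e0) (hX' : X' ≠ []) (hyX' : y ∉ X') :
    ∃ L1 A L2 e3 L4, L = L1 ++ (A ++ [z], e0) :: L2 ∧ a = blockWord y L1 ++ A ∧
      L2 ++ L1 = (X', e3) :: L4 := by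
  obtain ⟨L1, A, X2, e, L2, e1, e2, e3⟩ := blockWord_start h hb hs hz
  have hB := hL (A ++ z :: X2, e) (by rw [e1]; simp)
  have hX2 : X2 = [] := by
    cases X2 with
    | nil => rfl
    | cons c X2 =>
      obtain ⟨e0, rfl⟩ : ∃ k, e0 = k + 1 := ⟨e0 - 1, by omega⟩
      simp only [List.replicate_succ, List.cons_append, List.cons.injEq] at e3
      exact absurd (by rw [e3.1]; simp) hB.2.1
  subst hX2
  have hne : L2 ++ L1 ≠ [] := by
    intro hc
    simp at hc
    rw [e1, hc.1, hc.2] at hL2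
    simp at hL2
  obtain ⟨⟨X3, e3'⟩, L4, e4⟩ := List.exists_cons_of_ne_nil hne
  have hB3 := hL (X3, e3') (by
    have : (X3, e3') ∈ L2 ++ L1 := by rw [e4]; simp
    rw [e1]; simp at this ⊢; tauto)
  obtain ⟨c, X3', hc⟩ := List.exists_cons_of_ne_nil hB3.1
  obtain ⟨c', X'', hc'⟩ := List.exists_cons_of_ne_nil hX'
  have hcy : c ≠ y := by rintro rfl; exact hB3.2.1 (by simp only at hc; rw [hc]; simp)
  have hcy' : c' ≠ y := by rintro rfl; exact hyX' (by rw [hc']; simp)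
  rw [e4, blockWord_cons] at e3
  simp only [List.nil_append, List.append_assoc] at e3
  have he : e0 = e := by
    simp only at hc
    rw [hc, hc'] at e3
    exact pow_unique hcy' hcy e3
  subst he
  have e5 := List.append_cancel_left e3
  obtain ⟨e3'', rfl⟩ : ∃ k, e3' = k + 1 := ⟨e3' - 1, by have := hB3.2.2; simp only at this; omega⟩
  simp only [List.replicate_succ, List.cons_append] at e5
  have hX := prefix_unique hyX' hB3.2.1 e5
  refine ⟨L1, A, L2, e3'' + 1, L4, e1, e2, ?_⟩
  rw [e4, hX]

/-- A long infix of a concatenation contains many consecutive factors. -/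
theorem window (g : ℕ → List β) (M N : ℕ) (hM : 0 < M) (hg : ∀ i, (g i).length ≤ M) :
    ∀ (K s : ℕ) (x p y : List β), ((List.range' s K).map g).flatten = x ++ p ++ y →
    (N + 1) * M ≤ p.length →
    ∃ i, i + N ≤ s + K ∧ s ≤ i ∧ ((List.range' i N).map g).flatten <:+: p := by
  have hlen : ∀ (N s : ℕ), ((List.range' s N).map g).flatten.length ≤ N * M := by
    intro N
    induction N with
    | zero => simp
    | succ N ih =>
      intro s
      rw [List.range'_succ, List.map_cons, List.flatten_cons, List.length_append]
      have := ih (s + 1)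
      have := hg s
      rw [Nat.succ_mul]; omega
  intro K
  induction K with
  | zero =>
    intro s x p y h hp
    simp at h
    rw [h.2.1] at hp
    simp at hp; omega
  | succ K ih =>
    intro s x p y h hp
    rw [List.range'_succ, List.map_cons, List.flatten_cons, List.append_assoc] at h
    rcases List.append_eq_append_iff.mp h with ⟨x', h1, h2⟩ | ⟨z, h1, h2⟩
    · obtain ⟨i, h3, h4, h5⟩ := ih (s + 1) x' p y (by rw [h2]; simp) hp
      exact ⟨i, by omega, by omega, h5⟩
    · have hz : z.length ≤ M := by
        have := hg s
        rw [h1] at this; simp at this; omega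
      have hpz : M ≤ p.length := le_trans (by nlinarith) hp
      rcases List.append_eq_append_iff.mp h2 with ⟨c, h3, h4⟩ | ⟨p', h3, h4⟩
      · -- `p` is inside the first block
        have hc : c = [] := by
          have := congrArg List.length h3
          simp at this
          apply List.length_eq_zero_iff.mp; omega
        subst hc
        have hN : N = 0 := by
          have h7 : p.length ≤ M := by
            have := congrArg List.length h3
            simp at this; omega
          by_contra hN
          have : 1 * M < (N + 1) * M := Nat.mul_lt_mul_of_pos_right (by omega) hM
          omega
        subst hN
        exact ⟨s, by omega, le_rfl, ⟨[], p, by simp⟩⟩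
      · have hp' : N * M ≤ p'.length := by
          rw [h3, List.length_append, Nat.succ_mul] at hp; omega
        have hNK : N ≤ K := by
          by_contra hc
          have h6 := hlen K (s + 1)
          rw [h4, List.length_append] at h6
          have : K * M < N * M := Nat.mul_lt_mul_of_pos_right (by omega) hM
          omega
        refine ⟨s + 1, by omega, by omega, ?_⟩
        have hpre : ((List.range' (s + 1) N).map g).flatten <+: p' := by
          apply List.prefix_of_prefix_length_le (l₃ := p' ++ y)
          · rw [← h4]
            obtain ⟨d, rfl⟩ : ∃ d, K = N + d := ⟨K - N, by omega⟩
            rw [← List.range'_append_1, List.map_append, List.flatten_append]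
            simp
          · simp
          · exact le_trans (hlen _ _) hp'
        rw [h3]
        exact hpre.isInfix.trans ⟨z, [], by simp⟩

theorem rotated_infix {p q c : List β} (h : p ++ q ~r c) : p <:+: c ++ c := by
  obtain ⟨n, hn, hrot⟩ := List.isRotated_iff_mod.mp h.symm
  rw [List.rotate_eq_drop_append_take hn] at hrot
  have h1 : c ++ c = c.take n ++ (p ++ q) ++ c.drop n := by
    have h2 := List.take_append_drop n c
    rw [← hrot]
    generalize List.take n c = t at *
    generalize List.drop n c = d at *
    rw [← h2]; simp
  rw [h1]
  exact ⟨c.take n, q ++ c.drop n, by simp⟩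

theorem rotated_split {r c : List β} (h : r ~r c) (hr : r ≠ []) :
    ∃ a b, c = a ++ b ∧ b ≠ [] ∧ b ++ a = r := by
  obtain ⟨n, hn, hrot⟩ := List.isRotated_iff_mod.mp h.symm
  rw [List.rotate_eq_drop_append_take hn] at hrot
  rcases Nat.lt_or_ge n c.length with h1 | h1
  · exact ⟨c.take n, c.drop n, by simp, by simpa using h1, hrot⟩
  · have : n = c.length := by omega
    subst this
    refine ⟨[], c, by simp, ?_, by simpa using hrot⟩
    rintro rfl
    simp at hrot
    exact hr hrot

theorem rotated_swap {a b c : List β} (h : a ++ b ~r c) : b ++ a ~r c :=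
  (List.isRotated_append.symm.trans h)

end Blocks

end SmallCanc

namespace SmallCanc

open FreeGroup

theorem window_cyclic {β : Type} (g : ℕ → List β) (P M N : ℕ) (hP : 0 < P) (hM : 0 < M)
    (hg : ∀ i < P, (g i).length ≤ M) {p q : List β}
    (h : p ++ q ~r ((List.range P).map g).flatten) (hp : (N + 1) * M ≤ p.length) :
    ∃ i, i + N ≤ 2 * P ∧ ((List.range' i N).map fun j => g (j % P)).flatten <:+: p := by
  have hd : ((List.range P).map g).flatten ++ ((List.range P).map g).flatten =
      ((List.range' 0 (P + P)).map fun j => g (j % P)).flatten := by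
    rw [← List.range'_append_1, List.map_append, List.flatten_append]
    congr 2
    · rw [List.range'_eq_map_range, List.map_map]
      apply List.map_congr_left
      intro a ha
      have := List.mem_range.mp ha
      simp [Nat.mod_eq_of_lt this]
    · rw [List.range'_eq_map_range, List.map_map]
      apply List.map_congr_left
      intro a ha
      have := List.mem_range.mp ha
      simp [Nat.mod_eq_of_lt this]
  obtain ⟨x, y, hxy⟩ := rotated_infix h
  rw [hd] at hxy
  obtain ⟨i, h1, _, h2⟩ := window (fun j => g (j % P)) M N hM
    (fun i => hg _ (Nat.mod_lt _ hP)) (P + P) 0 x p y hxy.symm hp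
  exact ⟨i, by omega, h2⟩

section Concrete

variable {A : Type}

/-- positive letter -/
def pos (g : GenSym A) : GenSym A × Bool := (g, true)

/-- The triples `(x, y, lo)` for which `chainProd lo x y` is a relator. -/
inductive Tx : GenSym A → GenSym A → ℕ → Prop
  | v12 : Tx GenSym.f1 GenSym.f2 4000
  | v21 : Tx GenSym.f2 GenSym.f1 4000
  | b1 : Tx GenSym.b GenSym.f1 1000
  | b2 : Tx GenSym.b GenSym.f2 1000
  | c1 : Tx GenSym.c GenSym.f1 2000
  | c2 : Tx GenSym.c GenSym.f2 2000
  | d1 : Tx GenSym.d GenSym.f1 3000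
  | d2 : Tx GenSym.d GenSym.f2 3000
  | ac (a : A) : Tx (GenSym.elt a) GenSym.c 0
  | ad (a : A) : Tx (GenSym.elt a) GenSym.d 0

theorem Tx.ne {x y : GenSym A} {lo : ℕ} (h : Tx x y lo) : x ≠ y := by
  cases h <;> simp

theorem Tx.det {x y : GenSym A} {lo lo' : ℕ} (h : Tx x y lo) (h' : Tx x y lo') : lo = lo' := by
  cases h <;> cases h' <;> rfl

theorem Tx.swap {x y : GenSym A} {lo lo' : ℕ} (h : Tx x y lo) (h' : Tx y x lo') : lo = 4000 := by
  cases h <;> cases h' <;> rfl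

theorem Tx.le {x y : GenSym A} {lo : ℕ} (h : Tx x y lo) : lo ≤ 4000 := by
  cases h <;> omega

theorem Tx.y_ne_elt {x y : GenSym A} {lo : ℕ} (h : Tx x y lo) (a : A) : y ≠ GenSym.elt a := by
  cases h <;> simp

theorem Tx.y_ne_b {x y : GenSym A} {lo : ℕ} (h : Tx x y lo) : y ≠ GenSym.b := by
  cases h <;> simp

theorem Tx.b_elt {x y : GenSym A} {lo : ℕ} (h : Tx x y lo) (a : A)
    (hb : GenSym.b = x ∨ GenSym.b = y) (ha : GenSym.elt a = x ∨ GenSym.elt a = y) : False := by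
  cases h <;> simp at ha hb

def chainBlocks (x _y : GenSym A) (lo n : ℕ) : List (List (GenSym A × Bool) × ℕ) :=
  (List.range n).map fun k => ([pos x], (lo + k + 1) ^ 2)

def chainWord (x y : GenSym A) (lo : ℕ) : List (GenSym A × Bool) :=
  blockWord (pos y) (chainBlocks x y lo 1000)

theorem chainWord_def (x y : GenSym A) (lo : ℕ) :
    chainWord x y lo = blockWord (pos y) (chainBlocks x y lo 1000) := rfl

theorem chain_length (x y : GenSym A) (lo n : ℕ) :
    6 * (blockWord (pos y) (chainBlocks x y lo n)).length =
      6 * n + 6 * n * lo ^ 2 + 6 * lo * n * (n + 1) + n * (n + 1) * (2 * n + 1) := by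
  induction n with
  | zero => simp [chainBlocks, blockWord]
  | succ n ih =>
    have : chainBlocks x y lo (n + 1) = chainBlocks x y lo n ++ [([pos x], (lo + n + 1) ^ 2)] := by
      simp [chainBlocks, List.range_succ]
    rw [this, blockWord_append, List.length_append, mul_add, ih, blockWord_cons]
    simp [blockWord]
    ring

theorem chainBlocks_ok {x y : GenSym A} (h : x ≠ y) (lo n : ℕ) :
    BlocksOK (pos y) (chainBlocks x y lo n) := by
  intro B hB
  simp only [chainBlocks, List.mem_map, List.mem_range] at hB
  obtain ⟨k, _, rfl⟩ := hB
  refine ⟨by simp, by simpa [pos] using h.symm, Nat.one_le_pow _ _ (by omega)⟩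

theorem chainWord_eq (x y : GenSym A) (lo : ℕ) : chainWord x y lo =
    ((List.range 1000).map fun k => pos x :: List.replicate ((lo + k + 1) ^ 2) (pos y)).flatten := by
  simp [chainWord, blockWord, chainBlocks, List.flatMap, List.map_map, Function.comp_def]

theorem mem_chainWord {x y : GenSym A} {lo : ℕ} {z : GenSym A × Bool}
    (h : z ∈ chainWord x y lo) : z = pos x ∨ z = pos y := by
  rw [chainWord_eq] at h
  simp only [List.mem_flatten, List.mem_map] at h
  obtain ⟨_, ⟨k, _, rfl⟩, h⟩ := h
  simp only [List.mem_cons, List.mem_replicate] at h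
  exact h.imp_right And.right

/-- existence of markers in the chain relators -/
theorem chain_marker {x y : GenSym A} {lo : ℕ} {p q : List (GenSym A × Bool)}
    (h : p ++ q ~r chainWord x y lo) (hp : (p ++ q).length ≤ 8 * p.length) :
    ∃ k < 1000, pos x :: (List.replicate ((lo + k + 1) ^ 2) (pos y) ++ [pos x] ++ [pos y]) <:+: p := by
  have hl : (p ++ q).length = (chainWord x y lo).length := h.perm.length_eq
  have hlen := chain_length x y lo 1000
  rw [← chainWord_def] at hlen
  rw [chainWord_eq] at h
  have hg : ∀ k < 1000, (pos x :: List.replicate ((lo + k + 1) ^ 2) (pos y)).length ≤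
      (lo + 1000) ^ 2 + 1 := by
    intro k hk
    simp only [List.length_cons, List.length_replicate]
    have : (lo + k + 1) ^ 2 ≤ (lo + 1000) ^ 2 := Nat.pow_le_pow_left (by omega) 2
    omega
  have hp2 : (2 + 1) * ((lo + 1000) ^ 2 + 1) ≤ p.length := by nlinarith
  obtain ⟨i, h1, h2⟩ := window_cyclic
    (fun k => pos x :: List.replicate ((lo + k + 1) ^ 2) (pos y)) 1000 ((lo + 1000) ^ 2 + 1) 2
    (by norm_num) (Nat.succ_pos _) hg h hp2
  refine ⟨i % 1000, Nat.mod_lt _ (by norm_num), ?_⟩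
  refine List.IsInfix.trans ?_ h2
  obtain ⟨e, he⟩ : ∃ e, (lo + (i + 1) % 1000 + 1) ^ 2 = e + 1 :=
    ⟨(lo + (i + 1) % 1000 + 1) ^ 2 - 1, (Nat.sub_add_cancel (Nat.one_le_pow _ _ (by omega))).symm⟩
  refine ⟨[], List.replicate e (pos y), ?_⟩
  simp [List.range'_succ, he, List.replicate_succ]

theorem chain_locate {x y : GenSym A} (hxy : x ≠ y) {lo k : ℕ} {a b s : List (GenSym A × Bool)}
    (h : chainWord x y lo = a ++ b) (hb : b ≠ [])
    (hs : b ++ a = pos x :: (List.replicate ((lo + k + 1) ^ 2) (pos y) ++ [pos x] ++ pos y :: s)) :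
    a = blockWord (pos y) (chainBlocks x y lo k) := by
  obtain ⟨L1, A, L2, e3, L4, h1, h2, _⟩ := blockWord_locate (chainBlocks_ok hxy lo 1000)
    (by simp [chainBlocks]) h hb hs (by simpa [pos] using hxy) (Nat.one_le_pow _ _ (by omega))
    (by simp) (by simpa [pos] using hxy.symm)
  have hk : L1.length < 1000 := by
    have := congrArg List.length h1
    simp [chainBlocks] at this; omega
  have h3 : (chainBlocks x y lo 1000)[L1.length]? = some (A ++ [pos x], (lo + k + 1) ^ 2) := by
    rw [h1]; simp
  have h4 : (chainBlocks x y lo 1000)[L1.length]? = some ([pos x], (lo + L1.length + 1) ^ 2) := by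
    simp [chainBlocks, hk]
  rw [h3] at h4
  simp only [Option.some.injEq, Prod.mk.injEq] at h4
  have hA : A = [] := by
    have := congrArg List.length h4.1
    simpa using this
  have hk' : k = L1.length := by
    have := Nat.pow_left_injective (n := 2) (by norm_num) h4.2
    omega
  have hL1 : L1 = chainBlocks x y lo k := by
    have h5 : L1 = (chainBlocks x y lo 1000).take L1.length := by rw [h1]; simp
    rw [h5, ← hk']
    simp only [chainBlocks, ← List.map_take, List.take_range]
    rw [min_eq_left (by omega)]
  rw [h2, hA, hL1, List.append_nil]

/-- a doubled letter `x` does not occur in the chain word with base letter `x` -/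
theorem chain_no_double {x y : GenSym A} (hxy : x ≠ y) {lo : ℕ} {s : List (GenSym A × Bool)}
    (h : pos x :: pos x :: s ~r chainWord x y lo) : False := by
  obtain ⟨a, b, h1, hb, h2⟩ := rotated_split h (by simp)
  obtain ⟨L1, A, X2, e, L2, e1, e2, e3⟩ := blockWord_start h1 hb h2 (by simpa [pos] using hxy)
  have hm : (A ++ pos x :: X2, e) ∈ chainBlocks x y lo 1000 := by rw [e1]; simp
  simp only [chainBlocks, List.mem_map, Prod.mk.injEq] at hm
  obtain ⟨k, _, h3, h4⟩ := hm
  have hX2 : X2 = [] := by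
    have := congrArg List.length h3
    simp at this
    apply List.length_eq_zero_iff.mp; omega
  obtain ⟨e', he'⟩ : ∃ e', e = e' + 1 :=
    ⟨e - 1, by rw [← h4]; exact (Nat.sub_add_cancel (Nat.one_le_pow _ _ (by omega))).symm⟩
  rw [hX2, he'] at e3
  simp [List.replicate_succ, pos] at e3
  exact hxy e3.1

end Concrete

end SmallCanc

namespace SmallCanc

open FreeGroup

section Concrete

variable {A : Type}

theorem chain_run {x y : GenSym A} {lo : ℕ} (hlo : lo ≤ 4000) {p q : List (GenSym A × Bool)}
    (h : p ++ q ~r chainWord x y lo) (hp : 10 ^ 9 ≤ p.length) : pos x ∈ p ∧ pos y ∈ p := by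
  rw [chainWord_eq] at h
  have hg : ∀ k < 1000, (pos x :: List.replicate ((lo + k + 1) ^ 2) (pos y)).length ≤
      5000 ^ 2 + 1 := by
    intro k hk
    simp only [List.length_cons, List.length_replicate]
    have : (lo + k + 1) ^ 2 ≤ 5000 ^ 2 := Nat.pow_le_pow_left (by omega) 2
    omega
  obtain ⟨i, h1, h2⟩ := window_cyclic
    (fun k => pos x :: List.replicate ((lo + k + 1) ^ 2) (pos y)) 1000 (5000 ^ 2 + 1) 1
    (by norm_num) (Nat.succ_pos _) hg h (le_trans (by norm_num) hp)
  have h3 := h2.subset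
  constructor
  · apply h3; simp [List.range'_succ]
  · apply h3; simp [List.range'_succ]

def elts {n : ℕ} (as : Fin n → A) : List (GenSym A × Bool) :=
  List.ofFn fun i => pos (GenSym.elt (as i))

theorem elts_inj {n : ℕ} {as as' : Fin n → A} (h : elts as = elts as') : as = as' := by
  have := List.ofFn_injective h
  funext i
  have := congrFun this i
  simpa [pos] using this

theorem mem_elts {n : ℕ} {as : Fin n → A} {z : GenSym A × Bool} (h : z ∈ elts as) :
    ∃ a, z = pos (GenSym.elt a) := by
  simp only [elts, List.mem_ofFn] at h
  obtain ⟨i, rfl⟩ := h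
  exact ⟨_, rfl⟩

theorem elts_length {n : ℕ} (as : Fin n → A) : (elts as).length = n := by simp [elts]

def midBlocks (m n : ℕ) (X : List (GenSym A × Bool)) : List (List (GenSym A × Bool) × ℕ) :=
  (List.range n).map fun k => (X, 100 * m + 2 + k)

theorem mid_split {m e0 : ℕ} {X A' : List (GenSym A × Bool)}
    {J L1 L2 : List (List (GenSym A × Bool) × ℕ)}
    (hJ : ∀ B ∈ J, B.2 % 100 = 0 ∨ B.2 % 100 = 1)
    (h : midBlocks m 98 X ++ J = L1 ++ (A', e0) :: L2) (he : 2 ≤ e0 % 100) (he' : e0 % 100 ≤ 98) :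
    A' = X ∧ ∃ k ≤ 96, e0 = 100 * m + 2 + k ∧ L1 = midBlocks m k X ∧
      L2.head? = some (X, 100 * m + 3 + k) := by
  have hmem : (midBlocks m 98 X ++ J)[L1.length]? = some (A', e0) := by rw [h]; simp
  have hlm : (midBlocks m 98 X).length = 98 := by simp [midBlocks]
  by_cases hk : L1.length < 98
  · rw [List.getElem?_append_left (by rw [hlm]; exact hk)] at hmem
    have h4 : (midBlocks m 98 X)[L1.length]? = some (X, 100 * m + 2 + L1.length) := by
      simp [midBlocks, hk]
    rw [hmem] at h4
    simp only [Option.some.injEq, Prod.mk.injEq] at h4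
    refine ⟨h4.1, L1.length, by omega, h4.2, ?_, ?_⟩
    · have h5 : L1 = (midBlocks m 98 X ++ J).take L1.length := by rw [h]; simp
      rw [List.take_append_of_le_length (by omega)] at h5
      conv_lhs => rw [h5]
      simp only [midBlocks, ← List.map_take, List.take_range]
      rw [min_eq_left (by omega)]
    · have h5 : L2.head? = (midBlocks m 98 X ++ J)[L1.length + 1]? := by
        rw [h, List.head?_eq_getElem?, List.getElem?_append_right (by omega)]
        simp
      have hk2 : L1.length + 1 < 98 := by omega
      rw [h5, List.getElem?_append_left (by rw [hlm]; exact hk2)]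
      simp [midBlocks, hk2]
      omega
  · exfalso
    rw [List.getElem?_append_right (by omega)] at hmem
    have := hJ _ (List.mem_of_getElem? hmem)
    simp only at this
    omega

open Classical in
/-- the last blocks of the (cyclically reduced form of the) relator belonging to a symbol -/
noncomputable def endBlocks (S : IndexedStructure) (m : ℕ) (as : Fin (S.arity m) → S.A) :
    List (List (GenSym S.A × Bool) × ℕ) :=
  if S.isFunc m then
    if (elts as).head? = some (pos (GenSym.elt (S.funcInterp m as))) then
      if (elts as).tail = [] then [(elts as, 200 * m + 101)]
      else [(elts as, 100 * m + 100), ((elts as).tail, 100 * m + 1)]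
    else [(elts as, 100 * m + 100),
      ((GenSym.elt (S.funcInterp m as), false) :: elts as, 100 * m + 1)]
  else [(elts as, 100 * m + 100), (elts as, 100 * m + 1)]

theorem red_of_pos {L : List (GenSym A × Bool)} (h : ∀ z ∈ L, z.2 = true) : IsReduced L := by
  unfold FreeGroup.IsReduced
  induction L with
  | nil => simp
  | cons a L ih =>
    rw [List.isChain_cons]
    refine ⟨?_, ih fun z hz => h z (by simp [hz])⟩
    intro b hb _
    rw [h a (by simp), h b (by simp [List.mem_of_mem_head? hb])]

theorem elts_red {n : ℕ} (as : Fin n → A) : IsReduced (elts as) :=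
  red_of_pos fun z hz => by obtain ⟨a, rfl⟩ := mem_elts hz; rfl

theorem endBlocks_prop (S : IndexedStructure) (m : ℕ) (hm : 1 ≤ m) (as : Fin (S.arity m) → S.A) :
    ∀ B ∈ endBlocks S m as, B.1 ≠ [] ∧ (∀ z ∈ B.1, ∃ a, z.1 = GenSym.elt a) ∧ 1 ≤ B.2 ∧
      (B.2 % 100 = 0 ∨ B.2 % 100 = 1) ∧ IsReduced B.1 := by
  have hne : elts as ≠ [] := by
    have := S.arity_pos m hm
    intro h
    have h2 := elts_length as
    rw [h] at h2
    simp at h2; omega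
  have hel : ∀ z ∈ elts as, ∃ a, z.1 = GenSym.elt a := by
    intro z hz
    obtain ⟨a, rfl⟩ := mem_elts hz
    exact ⟨a, rfl⟩
  have hred := elts_red as
  have base : ∀ e, (1 ≤ e) → (e % 100 = 0 ∨ e % 100 = 1) → ((elts as, e) : _ × ℕ).1 ≠ [] ∧
      (∀ z ∈ ((elts as, e) : _ × ℕ).1, ∃ a, z.1 = GenSym.elt a) ∧ 1 ≤ ((elts as, e) : _ × ℕ).2 ∧
      (((elts as, e) : _ × ℕ).2 % 100 = 0 ∨ ((elts as, e) : _ × ℕ).2 % 100 = 1) ∧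
      IsReduced ((elts as, e) : _ × ℕ).1 := fun e h1 h2 => ⟨hne, hel, h1, h2, hred⟩
  intro B hB
  unfold endBlocks at hB
  split_ifs at hB with h1 h2 h3
  · simp at hB
    subst hB
    exact base _ (by omega) (by omega)
  · simp at hB
    rcases hB with rfl | rfl
    · exact base _ (by omega) (by omega)
    · refine ⟨h3, fun z hz => hel z (List.mem_of_mem_tail hz), by simp, by simp, ?_⟩
      exact hred.infix (List.tail_suffix _).isInfix
  · simp at hB
    rcases hB with rfl | rfl
    · exact base _ (by omega) (by omega)
    · refine ⟨by simp, ?_, by simp, by simp, ?_⟩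
      · intro z hz
        simp at hz
        rcases hz with rfl | hz
        · exact ⟨_, rfl⟩
        · exact hel z hz
      · unfold FreeGroup.IsReduced at hred ⊢
        rw [List.isChain_cons]
        refine ⟨?_, hred⟩
        intro y hy hyy
        exfalso
        apply h2
        rw [hy]
        obtain ⟨a, rfl⟩ := mem_elts (List.mem_of_mem_head? hy)
        simp only [pos] at hyy ⊢
        rw [hyy]
  · simp at hB
    rcases hB with rfl | rfl
    · exact base _ (by omega) (by omega)
    · exact base _ (by omega) (by omega)

theorem endBlocks_length (S : IndexedStructure) (m : ℕ) (y : GenSym S.A × Bool)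
    (as : Fin (S.arity m) → S.A) :
    (blockWord y (endBlocks S m as)).length ≤ 2 * S.arity m + 200 * m + 102 := by
  have := elts_length as
  unfold endBlocks
  split_ifs <;> simp [blockWord, this] <;> omega

noncomputable def symWord (S : IndexedStructure) (m : ℕ) (as : Fin (S.arity m) → S.A) :
    List (GenSym S.A × Bool) :=
  blockWord (pos GenSym.b) (midBlocks m 98 (elts as) ++ endBlocks S m as)

theorem symWord_eq (S : IndexedStructure) (m : ℕ) (as : Fin (S.arity m) → S.A) :
    symWord S m as = ((List.range 99).map fun k => if k < 98 then
      elts as ++ List.replicate (100 * m + 2 + k) (pos GenSym.b) else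
      blockWord (pos GenSym.b) (endBlocks S m as)).flatten := by
  have h1 : blockWord (pos GenSym.b) (midBlocks m 98 (elts as)) =
      ((List.range 98).map fun k => if k < 98 then
      elts as ++ List.replicate (100 * m + 2 + k) (pos GenSym.b) else
      blockWord (pos GenSym.b) (endBlocks S m as)).flatten := by
    rw [blockWord, midBlocks, List.flatMap, List.map_map]
    refine congrArg List.flatten (List.map_congr_left fun k hk => ?_)
    simp only [Function.comp_apply]
    rw [if_pos (List.mem_range.mp hk)]
  rw [List.range_succ, List.map_append, List.flatten_append, symWord, blockWord_append, h1]
  simp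

theorem mid_length (m n : ℕ) (X : List (GenSym A × Bool)) (y : GenSym A × Bool) :
    2 * (blockWord y (midBlocks m n X)).length + n = 2 * n * (X.length + 100 * m + 2) + n ^ 2 := by
  induction n with
  | zero => simp [midBlocks, blockWord]
  | succ n ih =>
    have : midBlocks m (n + 1) X = midBlocks m n X ++ [(X, 100 * m + 2 + n)] := by
      simp [midBlocks, List.range_succ]
    rw [this, blockWord_append, List.length_append, blockWord_cons]
    have h2 : ((X, 100 * m + 2 + n).1 ++ List.replicate (X, 100 * m + 2 + n).2 y ++
        blockWord y []).length = X.length + (100 * m + 2 + n) := by simp [blockWord]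
    rw [h2]
    nlinarith

theorem symBlocks_ok (S : IndexedStructure) (m : ℕ) (hm : 1 ≤ m) (as : Fin (S.arity m) → S.A) :
    ∀ B ∈ midBlocks m 98 (elts as) ++ endBlocks S m as,
      B.1 ≠ [] ∧ (∀ z ∈ B.1, ∃ a, z.1 = GenSym.elt a) ∧ 1 ≤ B.2 ∧ IsReduced B.1 := by
  intro B hB
  rw [List.mem_append] at hB
  rcases hB with hB | hB
  · simp only [midBlocks, List.mem_map] at hB
    obtain ⟨k, _, rfl⟩ := hB
    refine ⟨?_, ?_, by simp; omega, elts_red as⟩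
    · have := S.arity_pos m hm
      intro h
      have h2 := elts_length as
      simp only at h
      rw [h] at h2
      simp at h2; omega
    · intro z hz
      obtain ⟨a, rfl⟩ := mem_elts hz
      exact ⟨a, rfl⟩
  · have := endBlocks_prop S m hm as B hB
    exact ⟨this.1, this.2.1, this.2.2.1, this.2.2.2.2⟩

theorem symBlocksOK (S : IndexedStructure) (m : ℕ) (hm : 1 ≤ m) (as : Fin (S.arity m) → S.A) :
    BlocksOK (pos GenSym.b) (midBlocks m 98 (elts as) ++ endBlocks S m as) := by
  intro B hB
  obtain ⟨h1, h2, h3, _⟩ := symBlocks_ok S m hm as B hB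
  refine ⟨h1, ?_, h3⟩
  intro h
  obtain ⟨a, ha⟩ := h2 _ h
  simp [pos] at ha

theorem mem_symWord {S : IndexedStructure} {m : ℕ} (hm : 1 ≤ m) {as : Fin (S.arity m) → S.A}
    {z : GenSym S.A × Bool} (h : z ∈ symWord S m as) :
    z = pos GenSym.b ∨ ∃ a, z.1 = GenSym.elt a := by
  simp only [symWord, blockWord, List.mem_flatMap] at h
  obtain ⟨B, hB, h⟩ := h
  rw [List.mem_append] at h
  rcases h with h | h
  · exact Or.inr ((symBlocks_ok S m hm as B hB).2.1 z h)
  · exact Or.inl (List.eq_of_mem_replicate h)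

theorem sym_marker {S : IndexedStructure} {m : ℕ} (hm : 1 ≤ m) {as : Fin (S.arity m) → S.A}
    {p q : List (GenSym S.A × Bool)}
    (h : p ++ q ~r symWord S m as) (hp : (p ++ q).length ≤ 8 * p.length) :
    ∃ k ≤ 96, ∃ X0 z, elts as = X0 ++ [z] ∧
      z :: (List.replicate (100 * m + 2 + k) (pos GenSym.b) ++ elts as ++ [pos GenSym.b]) <:+: p := by
  have hl : (p ++ q).length = (symWord S m as).length := h.perm.length_eq
  have hlen := mid_length m 98 (elts as) (pos GenSym.b)
  have hel := elts_length as
  rw [hel] at hlen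
  have hc : (blockWord (pos GenSym.b) (midBlocks m 98 (elts as))).length ≤
      (symWord S m as).length := by
    rw [symWord, blockWord_append, List.length_append]; omega
  have har := S.arity_pos m hm
  have hend := endBlocks_length S m (pos GenSym.b) as
  rw [symWord_eq] at h
  have hg : ∀ k < 99, ((fun k => if k < 98 then
      elts as ++ List.replicate (100 * m + 2 + k) (pos GenSym.b) else
      blockWord (pos GenSym.b) (endBlocks S m as)) k).length ≤
      2 * S.arity m + 200 * m + 102 := by
    intro k hk
    simp only
    split_ifs
    · simp [hel]; omega
    · exact hend
  have hp2 : (4 + 1) * (2 * S.arity m + 200 * m + 102) ≤ p.length := by omega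
  obtain ⟨i, h1, h2⟩ := window_cyclic _ 99 (2 * S.arity m + 200 * m + 102) 4
    (by norm_num) (Nat.succ_pos _) hg h hp2
  have hne : elts as ≠ [] := by
    intro h
    rw [h] at hel
    simp at hel; omega
  obtain ⟨X0, z, hX0⟩ : ∃ X0 z, elts as = X0 ++ [z] := by
    rcases List.eq_nil_or_concat (elts as) with h | ⟨X0, z, h⟩
    · exact absurd h hne
    · exact ⟨X0, z, by simpa using h⟩
  simp only [List.range'_succ, List.range'_zero, List.map_cons, List.map_nil, List.flatten_cons,
    List.flatten_nil, List.append_nil] at h2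
  have hpair : ∀ t, t % 99 ≤ 96 → (fun k => if k < 98 then
      elts as ++ List.replicate (100 * m + 2 + k) (pos GenSym.b) else
      blockWord (pos GenSym.b) (endBlocks S m as)) (t % 99) ++ (fun k => if k < 98 then
      elts as ++ List.replicate (100 * m + 2 + k) (pos GenSym.b) else
      blockWord (pos GenSym.b) (endBlocks S m as)) ((t + 1) % 99) <:+: p →
      ∃ k ≤ 96, ∃ X0 z, elts as = X0 ++ [z] ∧
      z :: (List.replicate (100 * m + 2 + k) (pos GenSym.b) ++ elts as ++ [pos GenSym.b]) <:+: p := by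
    intro t ht hin
    have ht2 : (t + 1) % 99 < 98 := by omega
    simp only at hin
    rw [if_pos (by omega), if_pos ht2] at hin
    refine ⟨t % 99, ht, X0, z, hX0, List.IsInfix.trans ?_ hin⟩
    refine ⟨X0, List.replicate (100 * m + 1 + (t + 1) % 99) (pos GenSym.b), ?_⟩
    have : 100 * m + 2 + (t + 1) % 99 = (100 * m + 1 + (t + 1) % 99) + 1 := by omega
    rw [this, List.replicate_succ]
    nth_rewrite 2 [hX0]
    simp
  by_cases ht : i % 99 ≤ 96
  · apply hpair i ht
    exact List.IsInfix.trans ⟨[], _, by simp only [List.append_assoc, List.nil_append]; rfl⟩ h2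
  · apply hpair (i + 1 + 1) (by omega)
    exact ((List.suffix_append _ _).isInfix.trans (List.suffix_append _ _).isInfix).trans h2

theorem sym_locate {S : IndexedStructure} {m : ℕ} (hm : 1 ≤ m) {as : Fin (S.arity m) → S.A}
    {a b s X : List (GenSym S.A × Bool)} {z : GenSym S.A × Bool} {e0 : ℕ}
    (h : symWord S m as = a ++ b) (hb : b ≠ [])
    (hs : b ++ a = z :: (List.replicate e0 (pos GenSym.b) ++ X ++ pos GenSym.b :: s))
    (hz : z ≠ pos GenSym.b) (hX : X ≠ []) (hbX : pos GenSym.b ∉ X)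
    (he : 2 ≤ e0 % 100) (he' : e0 % 100 ≤ 98) :
    X = elts as ∧ ∃ k ≤ 96, e0 = 100 * m + 2 + k ∧ ∃ X0, X = X0 ++ [z] ∧
      a = blockWord (pos GenSym.b) (midBlocks m k X) ++ X0 := by
  obtain ⟨L1, A, L2, e3, L4, h1, h2, h3⟩ := blockWord_locate (symBlocksOK S m hm as)
    (by simp [midBlocks]; omega) h hb hs hz (by omega) hX hbX
  obtain ⟨h4, k, hk, h5, h6, h7⟩ := mid_split
    (fun B hB => (endBlocks_prop S m hm as B hB).2.2.2.1) h1 he he'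
  have hXe : X = elts as := by
    have : (L2 ++ L1).head? = some (elts as, 100 * m + 3 + k) := by
      rw [List.head?_append, h7]; rfl
    rw [h3] at this
    simp at this
    exact this.1
  refine ⟨hXe, k, hk, h5, A, by rw [hXe, h4], ?_⟩
  rw [h2, h6, hXe]

end Concrete

end SmallCanc

namespace SmallCanc

open FreeGroup

variable {S : IndexedStructure}

/-- The cyclic words of the relators other than `f₁^{p₁}` and `f₂^{p₂}`. -/
inductive Bb (S : IndexedStructure) : List (GenSym S.A × Bool) → Prop
  | chain {x y : GenSym S.A} {lo : ℕ} (h : Tx x y lo) : Bb S (chainWord x y lo)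
  | sym {m : ℕ} (hm : 1 ≤ m) (as : Fin (S.arity m) → S.A)
      (h : S.isFunc m ∨ S.relInterp m as) : Bb S (symWord S m as)

/-- Markers: subwords which determine the relator and the position. -/
inductive Mk (S : IndexedStructure) : List (GenSym S.A × Bool) → List (GenSym S.A × Bool) → Prop
  | chain {x y : GenSym S.A} {lo k : ℕ} (h : Tx x y lo) (hk : k < 1000) :
      Mk S (chainWord x y lo)
        (pos x :: (List.replicate ((lo + k + 1) ^ 2) (pos y) ++ [pos x] ++ [pos y]))
  | sym {m k : ℕ} (hm : 1 ≤ m) (as : Fin (S.arity m) → S.A) (hk : k ≤ 96)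
      {X0 : List (GenSym S.A × Bool)} {z : GenSym S.A × Bool} (hz : elts as = X0 ++ [z]) :
      Mk S (symWord S m as)
        (z :: (List.replicate (100 * m + 2 + k) (pos GenSym.b) ++ elts as ++ [pos GenSym.b]))

theorem pos_inj {A : Type} {x y : GenSym A} (h : pos x = pos y) : x = y := congrArg Prod.fst h

theorem Bb.marker {c p q : List (GenSym S.A × Bool)} (hc : Bb S c) (h : p ++ q ~r c)
    (hl : (p ++ q).length ≤ 8 * p.length) : ∃ M, Mk S c M ∧ M <:+: p := by
  cases hc with
  | chain ht =>
    obtain ⟨k, hk, hp⟩ := chain_marker h hl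
    exact ⟨_, Mk.chain ht hk, hp⟩
  | sym hm as _ =>
    obtain ⟨k, hk, X0, z, hz, hp⟩ := sym_marker hm h hl
    exact ⟨_, Mk.sym hm as hk hz, hp⟩

theorem mem_of_rot {β : Type} {M s a b c : List β} (hc : c = a ++ b) (h : b ++ a = M ++ s) {z : β}
    (hz : z ∈ M) : z ∈ c := by
  have : z ∈ b ++ a := by rw [h]; simp [hz]
  rw [hc]
  simp only [List.mem_append] at this ⊢
  exact this.symm

theorem marker_unique {c c' M a b s a' b' s' : List (GenSym S.A × Bool)} (hM : Mk S c M)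
    (hc' : Bb S c') (h1 : c = a ++ b) (hb : b ≠ []) (h2 : b ++ a = M ++ s)
    (h1' : c' = a' ++ b') (hb' : b' ≠ []) (h2' : b' ++ a' = M ++ s') : c = c' ∧ a = a' := by
  have hmem : ∀ z ∈ M, z ∈ c' := fun z hz => mem_of_rot h1' h2' hz
  cases hM with
  | @chain x y lo k ht hk =>
    have hx := hmem (pos x) (by simp)
    have hy := hmem (pos y) (by simp)
    cases hc' with
    | @chain x' y' lo' ht' =>
      have hx := mem_chainWord hx
      have hy := mem_chainWord hy
      have hne := ht.ne
      have key : (x = x' ∧ y = y') ∨ (x = y' ∧ y = x') := by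
        rcases hx with hx | hx <;> rcases hy with hy | hy
        · exact absurd ((pos_inj hx).trans (pos_inj hy).symm) hne
        · exact Or.inl ⟨pos_inj hx, pos_inj hy⟩
        · exact Or.inr ⟨pos_inj hx, pos_inj hy⟩
        · exact absurd ((pos_inj hx).trans (pos_inj hy).symm) hne
      rcases key with ⟨rfl, rfl⟩ | ⟨rfl, rfl⟩
      · obtain rfl := ht.det ht'
        refine ⟨rfl, ?_⟩
        rw [chain_locate hne h1 hb (k := k) (s := s) (by rw [h2]; simp),
          chain_locate hne h1' hb' (k := k) (s := s') (by rw [h2']; simp)]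
      · exfalso
        have h4 := ht.swap ht'
        obtain ⟨e, he⟩ : ∃ e, (lo + k + 1) ^ 2 = e + 2 :=
          ⟨(lo + k + 1) ^ 2 - 2, by
            have : 2 ≤ (lo + k + 1) ^ 2 := by nlinarith
            omega⟩
        rw [he] at h2'
        have hr : b' ++ a' ~r chainWord y x lo' := by
          rw [h1']; exact ⟨b'.length, by simp⟩
        rw [h2'] at hr
        have hr2 := rotated_swap (a := [pos x]) (b := pos y :: pos y ::
          (List.replicate e (pos y) ++ [pos x] ++ [pos y] ++ s')) (by
            simpa [List.replicate_succ] using hr)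
        exact chain_no_double hne.symm (s := (List.replicate e (pos y) ++ [pos x] ++ [pos y] ++ s')
          ++ [pos x]) (by simpa using hr2)
    | sym hm as _ =>
      exfalso
      rcases mem_symWord hm hy with h | ⟨a, h⟩
      · exact ht.y_ne_b (pos_inj h)
      · exact ht.y_ne_elt a h
  | @sym m k hm as hk X0 z hz =>
    have hbm := hmem (pos GenSym.b) (by simp)
    obtain ⟨a0, rfl⟩ := mem_elts (as := as) (z := z) (by rw [hz]; simp)
    have hzm := hmem _ (List.mem_cons_self ..)
    cases hc' with
    | @chain x' y' lo' ht' =>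
      exfalso
      exact ht'.b_elt a0 ((mem_chainWord hbm).imp pos_inj pos_inj)
        ((mem_chainWord hzm).imp pos_inj pos_inj)
    | @sym m' hm' as' h' =>
      have e1 : (pos (GenSym.elt a0) : GenSym S.A × Bool) ≠ pos GenSym.b := by
        intro h; cases pos_inj h
      have e2 : elts as ≠ [] := by rw [hz]; simp
      have e3 : pos GenSym.b ∉ elts as := by
        intro h
        obtain ⟨a, h⟩ := mem_elts h
        cases pos_inj h
      have e4 : 2 ≤ (100 * m + 2 + k) % 100 := by omega
      have e5 : (100 * m + 2 + k) % 100 ≤ 98 := by omega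
      obtain ⟨_, k1, hk1, hk1', X1, hX1, ha⟩ :=
        sym_locate hm h1 hb (s := s) (by rw [h2]; simp) e1 e2 e3 e4 e5
      obtain ⟨hX, k2, hk2, hk2', X2, hX2, ha'⟩ :=
        sym_locate hm' h1' hb' (s := s') (by rw [h2']; simp) e1 e2 e3 e4 e5
      obtain rfl : m = m' := by omega
      obtain rfl : k1 = k2 := by omega
      obtain rfl := elts_inj hX
      refine ⟨rfl, ?_⟩
      rw [ha, ha']
      rw [hX1] at hX2
      rw [List.append_left_injective _ hX2]

theorem Mk.ne_nil {c M : List (GenSym S.A × Bool)} (h : Mk S c M) : M ≠ [] := by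
  cases h <;> simp

theorem Mk.bb_two {c M : List (GenSym S.A × Bool)} (h : Mk S c M) :
    ∃ z w, z ∈ M ∧ w ∈ M ∧ z ≠ w := by
  cases h with
  | @chain x y lo k ht hk =>
    exact ⟨pos x, pos y, by simp, by simp, fun h => ht.ne (pos_inj h)⟩
  | @sym m k hm as hk X0 z hz =>
    obtain ⟨a0, rfl⟩ := mem_elts (as := as) (z := z) (by rw [hz]; simp)
    exact ⟨_, pos GenSym.b, List.mem_cons_self .., by simp, fun h => by cases pos_inj h⟩

theorem Mk.pos_mem {c M : List (GenSym S.A × Bool)} (h : Mk S c M) :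
    ∃ y, pos y ∈ M ∧ ∀ a, y ≠ GenSym.elt a := by
  cases h with
  | @chain x y lo k ht hk => exact ⟨y, by simp, ht.y_ne_elt⟩
  | @sym m k hm as hk X0 z hz => exact ⟨GenSym.b, by simp, fun a h => by cases h⟩

/-- piece property for two `Bb` words. -/
theorem Bb.piece {c c' p q q' : List (GenSym S.A × Bool)} (hc : Bb S c) (hc' : Bb S c')
    (h : p ++ q ~r c) (h' : p ++ q' ~r c') (hl : (p ++ q).length ≤ 8 * p.length) : q = q' := by
  obtain ⟨M, hM, p0, p1, hp⟩ := hc.marker h hl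
  subst hp
  have r1 : M ++ (p1 ++ q ++ p0) ~r c := by
    have := rotated_swap (a := p0) (b := M ++ p1 ++ q) (by simpa using h)
    simpa using this
  have r2 : M ++ (p1 ++ q' ++ p0) ~r c' := by
    have := rotated_swap (a := p0) (b := M ++ p1 ++ q') (by simpa using h')
    simpa using this
  obtain ⟨a, b, e1, e2, e3⟩ := rotated_split r1 (by simp [hM.ne_nil])
  obtain ⟨a', b', e1', e2', e3'⟩ := rotated_split r2 (by simp [hM.ne_nil])
  obtain ⟨rfl, rfl⟩ := marker_unique hM hc' e1 e2 e3 e1' e2' e3'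
  have hb : b = b' := by rw [e1] at e1'; exact List.append_cancel_left e1'
  subst hb
  rw [e3] at e3'
  simpa using e3'

theorem Bb.ne_nil {c : List (GenSym S.A × Bool)} (hc : Bb S c) : c ≠ [] := by
  obtain ⟨M, hM, h⟩ := hc.marker (p := c) (q := []) (by rw [List.append_nil]) (by simp; omega)
  intro e
  subst e
  exact hM.ne_nil (by simpa using h)

/-- `Bb` words are not proper powers. -/
theorem Bb.no_comm {c a b : List (GenSym S.A × Bool)} (hc : Bb S c) (h : a ++ b ~r c)
    (ha : a ≠ []) (hb : b ≠ []) (hab : a ++ b = b ++ a) : False := by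
  obtain ⟨M, hM, p0, p1, hp⟩ := hc.marker (p := a ++ b) (q := []) (by simpa using h)
    (by simp; omega)
  obtain ⟨w, hw⟩ : ∃ w, w = a ++ b := ⟨_, rfl⟩
  have hwn : w.length = a.length + b.length := by rw [hw]; simp
  have hal : 0 < a.length := List.length_pos_iff.mpr ha
  have hbl : 0 < b.length := List.length_pos_iff.mpr hb
  have hrot : w.rotate a.length = w := by rw [hw, List.rotate_append_length_eq, hab]
  have hp0 : p0.length < w.length := by
    rw [hw, ← hp]
    have := List.length_pos_iff.mpr hM.ne_nil
    simp; omega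
  have hM1 : w.rotate p0.length = M ++ (p1 ++ p0) := by
    rw [hw, ← hp, List.append_assoc, List.rotate_append_length_eq]; simp
  have hc1 : w ~r c := by rw [hw]; exact h
  obtain ⟨i, hi⟩ := hc1.symm
  have hlen : c.length = w.length := by rw [← hi]; simp
  have hM2 : c.rotate (i + p0.length) = M ++ (p1 ++ p0) := by
    rw [← List.rotate_rotate, hi, hM1]
  have hM3 : c.rotate (i + p0.length + a.length) = M ++ (p1 ++ p0) := by
    rw [← hM1, add_assoc, add_comm p0.length, ← add_assoc, ← List.rotate_rotate,
      ← List.rotate_rotate, hi, hrot]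
  have gen : ∀ j, c.rotate j = M ++ (p1 ++ p0) →
      c = c.take (j % c.length) ++ c.drop (j % c.length) ∧ c.drop (j % c.length) ≠ [] ∧
      c.drop (j % c.length) ++ c.take (j % c.length) = M ++ (p1 ++ p0) := by
    intro j hj
    have hlt : j % c.length < c.length := Nat.mod_lt _ (by omega)
    refine ⟨by simp, ?_, ?_⟩
    · intro e
      have := congrArg List.length e
      simp at this
      omega
    · rw [← hj, ← List.rotate_eq_drop_append_take hlt.le, List.rotate_mod]
  obtain ⟨g1, g2, g3⟩ := gen _ hM2
  obtain ⟨g1', g2', g3'⟩ := gen _ hM3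
  obtain ⟨_, he⟩ := marker_unique hM hc g1 g2 g3 g1' g2' g3'
  have he := congrArg List.length he
  have l1 : (i + p0.length) % c.length < c.length := Nat.mod_lt _ (by omega)
  have l2 : (i + p0.length + a.length) % c.length < c.length := Nat.mod_lt _ (by omega)
  rw [List.length_take, List.length_take, min_eq_left l1.le, min_eq_left l2.le] at he
  have h0 : (i + p0.length) + 0 ≡ (i + p0.length) + a.length [MOD c.length] := by
    simpa [Nat.ModEq] using he
  have h0 := Nat.ModEq.add_left_cancel' _ h0
  have : 0 = a.length := by
    have := Nat.ModEq.eq_of_lt_of_lt h0 (by omega) (by omega)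
    exact this
  omega

end SmallCanc

namespace SmallCanc

open FreeGroup

variable {S : IndexedStructure} {p₁ p₂ : ℕ}

/-- Cyclic words of all relators. -/
inductive BB (S : IndexedStructure) (p₁ p₂ : ℕ) : List (GenSym S.A × Bool) → Prop
  | rep {g : GenSym S.A} {n : ℕ} (h : (g = GenSym.f1 ∧ n = p₁) ∨ (g = GenSym.f2 ∧ n = p₂)) :
      BB S p₁ p₂ (List.replicate n (pos g))
  | bb {c : List (GenSym S.A × Bool)} (h : Bb S c) : BB S p₁ p₂ c

/-- The symmetrised set of relators. -/
def RR (S : IndexedStructure) (p₁ p₂ : ℕ) : Set (List (GenSym S.A × Bool)) :=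
  {r | ∃ c, BB S p₁ p₂ c ∧ (r ~r c ∨ invRev r ~r c)}

theorem Bb.sign {c : List (GenSym S.A × Bool)} (hc : Bb S c) {z : GenSym S.A × Bool}
    (hz : z ∈ c) : z.2 = true ∨ ∃ a, z.1 = GenSym.elt a := by
  cases hc with
  | chain ht => rcases mem_chainWord hz with rfl | rfl <;> exact Or.inl rfl
  | sym hm as _ =>
    rcases mem_symWord hm hz with rfl | h
    · exact Or.inl rfl
    · exact Or.inr h

theorem BB.sign {c : List (GenSym S.A × Bool)} (hc : BB S p₁ p₂ c) {z : GenSym S.A × Bool}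
    (hz : z ∈ c) : z.2 = true ∨ ∃ a, z.1 = GenSym.elt a := by
  cases hc with
  | rep h => rw [List.eq_of_mem_replicate hz]; exact Or.inl rfl
  | bb h => exact h.sign hz

theorem rot_replicate {β : Type} {l : List β} {n : ℕ} {z : β} (h : l ~r List.replicate n z) :
    l = List.replicate n z := by
  obtain ⟨k, hk⟩ := h.symm
  rw [List.rotate_replicate] at hk
  exact hk.symm

theorem BB.pos_in (h1 : 10 ^ 10 < p₁) (h2 : 10 ^ 10 < p₂) {c p q : List (GenSym S.A × Bool)}
    (hc : BB S p₁ p₂ c) (h : p ++ q ~r c)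
    (hl : (p ++ q).length ≤ 8 * p.length) : ∃ y, pos y ∈ p ∧ ∀ a, y ≠ GenSym.elt a := by
  cases hc with
  | @rep g n hg =>
    have e := rot_replicate h
    have hn : 0 < n := by rcases hg with ⟨_, rfl⟩ | ⟨_, rfl⟩ <;> omega
    have e2 : p.length ≠ 0 := by
      intro h0
      rw [e, List.length_replicate] at hl
      omega
    obtain ⟨z, hz⟩ := List.exists_mem_of_length_pos (Nat.pos_of_ne_zero e2)
    have : z = pos g := List.eq_of_mem_replicate (n := n) (by rw [← e]; simp [hz])
    subst this
    refine ⟨g, hz, ?_⟩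
    rcases hg with ⟨rfl, _⟩ | ⟨rfl, _⟩ <;> intro a h <;> cases h
  | bb hb =>
    obtain ⟨M, hM, hp⟩ := hb.marker h hl
    obtain ⟨y, hy, hy'⟩ := hM.pos_mem
    exact ⟨y, hp.subset hy, hy'⟩

theorem BB.piece (h1 : 10 ^ 10 < p₁) (h2 : 10 ^ 10 < p₂) {c c' p q q' : List (GenSym S.A × Bool)}
    (hc : BB S p₁ p₂ c) (hc' : BB S p₁ p₂ c')
    (h : p ++ q ~r c) (h' : p ++ q' ~r c') (hl : (p ++ q).length ≤ 8 * p.length) : q = q' := by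
  obtain ⟨y, hy, hy'⟩ := hc.pos_in h1 h2 h hl
  cases hc with
  | @rep g n hg =>
    have e := rot_replicate h
    have hn : 10 ^ 10 < n := by rcases hg with ⟨_, rfl⟩ | ⟨_, rfl⟩ <;> assumption
    have hlen : 10 ^ 9 ≤ p.length := by
      rw [e, List.length_replicate] at hl
      norm_num at hn ⊢
      omega
    have hall : ∀ z ∈ p, z = pos g := fun z hz =>
      List.eq_of_mem_replicate (n := n) (by rw [← e]; simp [hz])
    obtain rfl := pos_inj (hall _ hy)
    cases hc' with
    | @rep g' n' hg' =>
      have e' := rot_replicate h'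
      have : pos y = pos g' := List.eq_of_mem_replicate (n := n') (by rw [← e']; simp [hy])
      obtain rfl := pos_inj this
      have : n = n' := by
        rcases hg with ⟨a, b⟩ | ⟨a, b⟩ <;> rcases hg' with ⟨a', b'⟩ | ⟨a', b'⟩
        · rw [b, b']
        · rw [a] at a'; cases a'
        · rw [a] at a'; cases a'
        · rw [b, b']
      subst this
      rw [← e'] at e
      exact List.append_cancel_left e
    | bb hb' =>
      exfalso
      cases hb' with
      | chain ht =>
        obtain ⟨a1, a2⟩ := chain_run ht.le h' hlen
        exact ht.ne ((pos_inj (hall _ a1)).trans (pos_inj (hall _ a2)).symm)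
      | sym hm as _ =>
        have : pos y ∈ symWord S _ as := h'.mem_iff.mp (by simp [hy])
        rcases mem_symWord hm this with hz | ⟨a, hz⟩
        · have := pos_inj hz
          rcases hg with ⟨a, b⟩ | ⟨a, b⟩ <;> rw [a] at this <;> cases this
        · exact hy' a hz
  | bb hb =>
    cases hc' with
    | @rep g' n' hg' =>
      exfalso
      obtain ⟨M, hM, hp⟩ := hb.marker h hl
      obtain ⟨z, w, hz, hw, hne⟩ := hM.bb_two
      have e' := rot_replicate h'
      have hall : ∀ z ∈ M, z = pos g' := fun z hz =>
        List.eq_of_mem_replicate (n := n') (by rw [← e']; simp [hp.subset hz])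
      exact hne ((hall z hz).trans (hall w hw).symm)
    | bb hb' => exact hb.piece hb' h h' hl

theorem mem_invRev {α : Type} {z : α × Bool} {l : List (α × Bool)} (h : z ∈ l) :
    (z.1, !z.2) ∈ invRev l := by
  unfold FreeGroup.invRev
  rw [List.mem_reverse]
  exact List.mem_map_of_mem h

theorem BB.orient (h1 : 10 ^ 10 < p₁) (h2 : 10 ^ 10 < p₂) {c c' p q q' : List (GenSym S.A × Bool)}
    (hc : BB S p₁ p₂ c) (hc' : BB S p₁ p₂ c')
    (h : p ++ q ~r c) (h' : invRev (p ++ q') ~r c') (hl : (p ++ q).length ≤ 8 * p.length) :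
    False := by
  obtain ⟨y, hy, hy'⟩ := hc.pos_in h1 h2 h hl
  have : (y, false) ∈ c' := h'.mem_iff.mp (mem_invRev (z := pos y) (by simp [hy]))
  rcases hc'.sign this with h | ⟨a, h⟩
  · cases h
  · exact hy' a h

theorem red_invRev {α : Type} {l : List (α × Bool)} (h : IsReduced l) : IsReduced (invRev l) := by
  classical
  rw [isReduced_iff_reduce_eq] at h ⊢
  rw [reduce_invRev, h]

theorem block_red (L : List (List (GenSym S.A × Bool) × ℕ))
    (h : ∀ B ∈ L, B.1 ≠ [] ∧ (∀ z ∈ B.1, ∃ a, z.1 = GenSym.elt a) ∧ 1 ≤ B.2 ∧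
      FreeGroup.IsReduced B.1) :
    IsReduced (blockWord (pos GenSym.b) L) ∧
      ∀ z ∈ (blockWord (pos GenSym.b) L).head?, ∃ a, z.1 = GenSym.elt a := by
  induction L with
  | nil => simp [blockWord, FreeGroup.IsReduced]
  | cons B L ih =>
    obtain ⟨i1, i2⟩ := ih fun B hB => h B (by simp [hB])
    obtain ⟨j1, j2, j3, j4⟩ := h B (by simp)
    have e : blockWord (pos GenSym.b) (B :: L) =
        (B.1 ++ List.replicate B.2 (pos GenSym.b)) ++ blockWord (pos GenSym.b) L := by
      simp [blockWord]
    rw [e]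
    have r1 : IsReduced (B.1 ++ List.replicate B.2 (pos (GenSym.b : GenSym S.A))) := by
      refine red_append j4 (red_of_pos fun z hz => by rw [List.eq_of_mem_replicate hz]; rfl) ?_
      intro x hx y hy hxy
      obtain ⟨a, ha⟩ := j2 x (List.mem_of_mem_getLast? hx)
      have := List.eq_of_mem_replicate (List.mem_of_mem_head? hy)
      subst this
      rw [ha] at hxy
      cases hxy
    refine ⟨red_append r1 i1 ?_, ?_⟩
    · intro x hx y hy hxy
      obtain ⟨a, ha⟩ := i2 y hy
      have hx2 : x = pos GenSym.b := by
        obtain ⟨n, hn⟩ : ∃ n, B.2 = n + 1 := ⟨B.2 - 1, by omega⟩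
        rw [hn, List.replicate_succ', ← List.append_assoc] at hx
        simpa using hx.symm
      subst hx2
      rw [ha] at hxy
      cases hxy
    · intro z hz
      obtain ⟨w, l, hw⟩ := List.exists_cons_of_ne_nil j1
      rw [hw] at hz
      simp at hz
      subst hz
      exact j2 _ (by rw [hw]; simp)

theorem BB.red {c : List (GenSym S.A × Bool)} (hc : BB S p₁ p₂ c) : IsReduced (c ++ c) := by
  cases hc with
  | rep h =>
    refine red_of_pos fun z hz => ?_
    rw [← List.replicate_add] at hz
    rw [List.eq_of_mem_replicate hz]; rfl
  | bb h =>
    cases h with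
    | @chain x y lo ht =>
      refine red_of_pos fun z hz => ?_
      have : z ∈ chainWord x y lo := by simpa using hz
      rcases mem_chainWord this with rfl | rfl <;> rfl
    | @sym m hm as _ =>
      unfold symWord
      rw [← blockWord_append]
      refine (block_red _ fun B hB => ?_).1
      have hB : B ∈ midBlocks m 98 (elts as) ++ endBlocks S m as := by
        rcases List.mem_append.mp hB with h | h <;> exact h
      exact symBlocks_ok S _ hm as B hB

theorem BB.red' {c r : List (GenSym S.A × Bool)} (hc : BB S p₁ p₂ c) (h : r ~r c) :
    IsReduced r := by
  have := rotated_infix (p := r) (q := []) (by simpa using h)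
  exact List.IsChain.infix hc.red this

theorem BB.ne_nil (h1 : 10 ^ 10 < p₁) (h2 : 10 ^ 10 < p₂) {c : List (GenSym S.A × Bool)}
    (hc : BB S p₁ p₂ c) : c ≠ [] := by
  cases hc with
  | rep h =>
    intro e
    have := congrArg List.length e
    simp at this
    rcases h with ⟨_, rfl⟩ | ⟨_, rfl⟩ <;> omega
  | bb h => exact h.ne_nil

theorem RR_sc (h1 : 10 ^ 10 < p₁) (h2 : 10 ^ 10 < p₂) : SC (RR S p₁ p₂) where
  red := by
    rintro r ⟨c, hc, h | h⟩
    · exact hc.red' h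
    · rw [← invRev_invRev (L₁ := r)]
      exact red_invRev (hc.red' h)
  ne := by
    rintro r ⟨c, hc, h | h⟩ rfl
    · exact hc.ne_nil h1 h2 (List.isRotated_nil_iff'.mp h).symm
    · rw [invRev_empty] at h
      exact hc.ne_nil h1 h2 (List.isRotated_nil_iff'.mp h).symm
  rot := by
    rintro a b ⟨c, hc, h | h⟩
    · exact ⟨c, hc, Or.inl (rotated_swap h)⟩
    · refine ⟨c, hc, Or.inr ?_⟩
      rw [invRev_append] at h ⊢
      exact rotated_swap h
  inv := by
    rintro r ⟨c, hc, h | h⟩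
    · exact ⟨c, hc, Or.inr (by rwa [invRev_invRev])⟩
    · exact ⟨c, hc, Or.inl h⟩
  piece := by
    rintro p q q' ⟨c, hc, h | h⟩ ⟨c', hc', h' | h'⟩ hl
    · exact hc.piece h1 h2 hc' h h' hl
    · exact (hc.orient h1 h2 hc' h h' hl).elim
    · exfalso
      rw [invRev_append] at h
      have h := rotated_swap h
      refine hc.orient h1 h2 hc' (p := invRev p) (q := invRev q) (q' := invRev q') h ?_ ?_
      · rw [invRev_append, invRev_invRev, invRev_invRev]
        exact rotated_swap h'
      · simpa using hl
    · rw [invRev_append] at h h'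
      exact invRev_injective (hc.piece h1 h2 hc' (rotated_swap h) (rotated_swap h')
        (by simpa using hl))

theorem mk_replicate {α : Type} (g : α) (n : ℕ) :
    FreeGroup.mk (List.replicate n (g, true)) = FreeGroup.of g ^ n := by
  induction n with
  | zero => rfl
  | succ n ih => rw [List.replicate_succ', ← FreeGroup.mul_mk, ih, pow_succ]; rfl

theorem BB.comm {c a b : List (GenSym S.A × Bool)} (hc : BB S p₁ p₂ c) (h : a ++ b ~r c)
    (ha : a ≠ []) (hb : b ≠ []) (hab : a ++ b = b ++ a) :
    ∃ n : ℕ, FreeGroup.mk a = FreeGroup.of GenSym.f1 ^ n ∨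
      FreeGroup.mk a = FreeGroup.of GenSym.f2 ^ n := by
  cases hc with
  | @rep g n hg =>
    have e := rot_replicate h
    have ea : a = List.replicate a.length (pos g) := by
      rw [List.eq_replicate_iff]
      exact ⟨rfl, fun z hz => List.eq_of_mem_replicate (n := n) (by rw [← e]; simp [hz])⟩
    refine ⟨a.length, ?_⟩
    rw [ea]
    unfold pos
    rw [mk_replicate, List.length_replicate]
    rcases hg with ⟨rfl, _⟩ | ⟨rfl, _⟩
    · exact Or.inl rfl
    · exact Or.inr rfl
  | bb hb' => exact (hb'.no_comm h ha hb hab).elim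

theorem RR_comm {a b : List (GenSym S.A × Bool)} (hr : a ++ b ∈ RR S p₁ p₂)
    (ha : a ≠ []) (hb : b ≠ []) (hab : a ++ b = b ++ a) :
    ∃ n : ℤ, FreeGroup.mk a = FreeGroup.of GenSym.f1 ^ n ∨
      FreeGroup.mk a = FreeGroup.of GenSym.f2 ^ n := by
  obtain ⟨c, hc, h | h⟩ := hr
  · obtain ⟨n, hn⟩ := hc.comm h ha hb hab
    exact ⟨n, by simpa using hn⟩
  · rw [invRev_append] at h
    have nn : ∀ l : List (GenSym S.A × Bool), l ≠ [] → invRev l ≠ [] := by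
      intro l hl e
      apply hl
      rw [← invRev_invRev (L₁ := l), e, invRev_empty]
    obtain ⟨n, hn⟩ := hc.comm (rotated_swap h) (nn a ha) (nn b hb) (by
      rw [← invRev_append, ← invRev_append, hab])
    refine ⟨-n, ?_⟩
    rw [← inv_mk] at hn
    rw [inv_eq_iff_eq_inv, inv_eq_iff_eq_inv] at hn
    rw [zpow_neg, zpow_neg, zpow_natCast, zpow_natCast]
    exact hn

end SmallCanc

namespace SmallCanc

open FreeGroup

variable {S : IndexedStructure} {p₁ p₂ : ℕ}

theorem mk_flatten {α : Type} (L : List (List (α × Bool))) :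
    FreeGroup.mk L.flatten = (L.map FreeGroup.mk).prod := by
  induction L with
  | nil => rfl
  | cons a L ih => rw [List.flatten_cons, ← FreeGroup.mul_mk, ih, List.map_cons, List.prod_cons]

theorem mk_pos_cons {A : Type} (x : GenSym A) (l : List (GenSym A × Bool)) :
    FreeGroup.mk (pos x :: l) = FreeGroup.of x * FreeGroup.mk l := by
  rw [FreeGroup.of, FreeGroup.mul_mk]; rfl

theorem mk_rep_pos {A : Type} (x : GenSym A) (n : ℕ) :
    FreeGroup.mk (List.replicate n (pos x)) = FreeGroup.of x ^ n := mk_replicate x n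

theorem mk_chainWord {A : Type} (x y : GenSym A) (lo : ℕ) :
    FreeGroup.mk (chainWord x y lo) = chainProd lo (FreeGroup.of x) (FreeGroup.of y) := by
  rw [chainWord_eq, mk_flatten]
  unfold chainProd
  rw [List.map_map]
  refine congrArg List.prod (List.map_congr_left fun k _ => ?_)
  show FreeGroup.mk (pos x :: List.replicate ((lo + k + 1) ^ 2) (pos y)) = _
  rw [mk_pos_cons, mk_rep_pos]

theorem mk_elts {A : Type} {n : ℕ} (as : Fin n → A) :
    FreeGroup.mk (elts as) = (List.ofFn fun i => FreeGroup.of (GenSym.elt (as i))).prod := by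
  have h1 : ∀ l : List A, FreeGroup.mk (l.map fun a => pos (GenSym.elt a)) =
      (l.map fun a => FreeGroup.of (GenSym.elt a)).prod := by
    intro l
    induction l with
    | nil => rfl
    | cons a l ih => rw [List.map_cons, mk_pos_cons, ih, List.map_cons, List.prod_cons]
  have h2 := h1 (List.ofFn as)
  rw [List.map_ofFn, List.map_ofFn] at h2
  exact h2

theorem prod_range_two {G : Type} [Group G] (n : ℕ) (f : ℕ → G) :
    ((List.range (n + 2)).map f).prod =
      f 0 * ((List.range n).map fun k => f (k + 1)).prod * f (n + 1) := by
  rw [List.prod_range_succ, List.prod_range_succ']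

theorem mk_blockWord {A : Type} (y : GenSym A) (L : List (List (GenSym A × Bool) × ℕ)) :
    FreeGroup.mk (blockWord (pos y) L) =
      (L.map fun B => FreeGroup.mk B.1 * FreeGroup.of y ^ B.2).prod := by
  unfold blockWord
  rw [List.flatMap_def, mk_flatten, List.map_map]
  congr 1
  refine List.map_congr_left fun B _ => ?_
  show FreeGroup.mk (B.1 ++ List.replicate B.2 (pos y)) = _
  rw [← FreeGroup.mul_mk, mk_rep_pos]

open Classical in
theorem mk_symWord (S : IndexedStructure) (m : ℕ) (as : Fin (S.arity m) → S.A) :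
    wProd m (fun i => FreeGroup.of (GenSym.elt (as i))) (FreeGroup.of GenSym.b) *
      (if S.isFunc m then (FreeGroup.of (GenSym.elt (S.funcInterp m as)))⁻¹ else 1) =
    (FreeGroup.mk (elts as) * FreeGroup.of GenSym.b ^ (100 * m + 1)) *
      FreeGroup.mk (symWord S m as) *
      (FreeGroup.mk (elts as) * FreeGroup.of GenSym.b ^ (100 * m + 1))⁻¹ := by
  have hw : wProd m (fun i => FreeGroup.of (GenSym.elt (as i))) (FreeGroup.of GenSym.b) =
      (FreeGroup.mk (elts as) * FreeGroup.of GenSym.b ^ (100 * m + 1)) *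
      FreeGroup.mk (blockWord (pos GenSym.b) (midBlocks m 98 (elts as))) *
      (FreeGroup.mk (elts as) * FreeGroup.of GenSym.b ^ (100 * m + 100)) := by
    unfold wProd
    rw [← mk_elts]
    have := prod_range_two 98 (fun k => FreeGroup.mk (elts as) *
      FreeGroup.of (GenSym.b : GenSym S.A) ^ (100 * m + k + 1))
    refine Eq.trans this ?_
    refine congrArg₂ (· * ·) (congrArg₂ (· * ·) rfl ?_)
      (congrArg (fun e => FreeGroup.mk (elts as) * FreeGroup.of (GenSym.b : GenSym S.A) ^ e)
        (by omega : 100 * m + (98 + 1) + 1 = 100 * m + 100))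
    rw [mk_blockWord]
    unfold midBlocks
    rw [List.map_map]
    refine congrArg List.prod (List.map_congr_left fun k _ => ?_)
    show _ = FreeGroup.mk (elts as) * FreeGroup.of (GenSym.b : GenSym S.A) ^ (100 * m + 2 + k)
    congr 2
    omega
  have he : FreeGroup.mk (blockWord (pos GenSym.b) (endBlocks S m as)) =
      (FreeGroup.mk (elts as) * FreeGroup.of GenSym.b ^ (100 * m + 100)) *
      (if S.isFunc m then (FreeGroup.of (GenSym.elt (S.funcInterp m as)))⁻¹ else 1) *
      (FreeGroup.mk (elts as) * FreeGroup.of GenSym.b ^ (100 * m + 1)) := by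
    rw [mk_blockWord]
    unfold endBlocks
    by_cases hf : S.isFunc m
    · rw [if_pos hf, if_pos hf]
      by_cases hh : (elts as).head? = some (pos (GenSym.elt (S.funcInterp m as)))
      · have hX : elts as = pos (GenSym.elt (S.funcInterp m as)) :: (elts as).tail := by
          cases hE : elts as with
          | nil => rw [hE] at hh; simp at hh
          | cons a l => rw [hE] at hh; simp at hh; rw [hh]; rfl
        have hX2 : FreeGroup.mk (elts as) = FreeGroup.of (GenSym.elt (S.funcInterp m as)) *
            FreeGroup.mk (elts as).tail := by
          conv_lhs => rw [hX]
          rw [mk_pos_cons]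
        rw [if_pos hh]
        by_cases ht : (elts as).tail = []
        · rw [if_pos ht]
          rw [ht, mk_nil, mul_one] at hX2
          simp only [List.map_cons, List.map_nil, List.prod_cons, List.prod_nil, mul_one]
          rw [hX2, mul_assoc, inv_mul_cancel_left, mul_assoc, ← pow_add]
          congr 2
          omega
        · rw [if_neg ht]
          simp only [List.map_cons, List.map_nil, List.prod_cons, List.prod_nil, mul_one]
          rw [hX2]
          group
      · rw [if_neg hh]
        simp only [List.map_cons, List.map_nil, List.prod_cons, List.prod_nil, mul_one]
        have : FreeGroup.mk ((GenSym.elt (S.funcInterp m as), false) :: elts as) =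
            (FreeGroup.of (GenSym.elt (S.funcInterp m as)))⁻¹ * FreeGroup.mk (elts as) := by
          rw [FreeGroup.of, inv_mk, FreeGroup.mul_mk]; rfl
        rw [this]
        group
    · rw [if_neg hf, if_neg hf]
      simp only [List.map_cons, List.map_nil, List.prod_cons, List.prod_nil, mul_one]
  unfold symWord
  rw [blockWord_append, ← FreeGroup.mul_mk, he, hw]
  group

end SmallCanc

namespace SmallCanc

open FreeGroup

variable {S : IndexedStructure} {p₁ p₂ : ℕ}

theorem Ar.mul {α : Type} {R : Set (List (α × Bool))} {n m : ℕ} {g h : FreeGroup α}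
    (hg : Ar R n g) (hh : Ar R m h) : Ar R (n + m) (g * h) := by
  induction hg with
  | one k => rw [one_mul]; exact hh.mono (by omega)
  | @step k P Q r hr _ ih =>
    have := ih
    rw [mul_assoc P Q h] at this
    have h2 := Ar.step hr this
    rw [← mul_assoc] at h2
    exact h2.mono (by omega)

theorem Ar.conj {α : Type} {R : Set (List (α × Bool))} {n : ℕ} {g : FreeGroup α}
    (hg : Ar R n g) (k : FreeGroup α) : Ar R n (k * g * k⁻¹) := by
  induction hg with
  | one n => rw [mul_one, mul_inv_cancel]; exact Ar.one n
  | @step n P Q r hr _ ih => exact Ar.ins (k * P) (Q * k⁻¹) ih hr (by group) (by group)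

theorem Ar.inv {α : Type} {R : Set (List (α × Bool))} (hR : SC R) {n : ℕ} {g : FreeGroup α}
    (hg : Ar R n g) : Ar R n g⁻¹ := by
  induction hg with
  | one n => rw [inv_one]; exact Ar.one n
  | @step n P Q r hr _ ih => exact Ar.insInv hR Q⁻¹ P⁻¹ ih hr (by group) (by group)

/-- the normal subgroup of all products of conjugates -/
def arSub {α : Type} {R : Set (List (α × Bool))} (hR : SC R) : Subgroup (FreeGroup α) where
  carrier := {g | ∃ n, Ar R n g}
  mul_mem' := by
    rintro a b ⟨n, hn⟩ ⟨m, hm⟩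
    exact ⟨_, hn.mul hm⟩
  one_mem' := ⟨0, Ar.one 0⟩
  inv_mem' := by
    rintro a ⟨n, hn⟩
    exact ⟨n, hn.inv hR⟩

theorem arSub_normal {α : Type} {R : Set (List (α × Bool))} (hR : SC R) : (arSub hR).Normal :=
  ⟨fun g ⟨n, hn⟩ k => ⟨n, hn.conj k⟩⟩

theorem rel_of_tx {x y : GenSym S.A} {lo : ℕ} (h : Tx x y lo) :
    chainProd lo (FreeGroup.of x) (FreeGroup.of y) ∈ grpRels S p₁ p₂ := by
  unfold grpRels
  simp only [Set.mem_union, Set.mem_insert_iff, Set.mem_singleton_iff, Set.mem_ofPred_eq]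
  cases h
  case ac a => exact Or.inl (Or.inl (Or.inr ⟨a, Or.inl rfl⟩))
  case ad a => exact Or.inl (Or.inl (Or.inr ⟨a, Or.inr rfl⟩))
  all_goals exact Or.inl (Or.inl (Or.inl (by simp only [true_or, or_true])))

theorem rel_of_BB {c : List (GenSym S.A × Bool)} (hc : BB S p₁ p₂ c) :
    ∃ r ∈ grpRels S p₁ p₂, ∃ k, r = k * FreeGroup.mk c * k⁻¹ := by
  classical
  cases hc with
  | @rep g n h =>
    refine ⟨FreeGroup.of g ^ n, ?_, 1, ?_⟩
    · unfold grpRels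
      rcases h with ⟨rfl, rfl⟩ | ⟨rfl, rfl⟩
      · exact Or.inl (Or.inl (Or.inl (Or.inl rfl)))
      · exact Or.inl (Or.inl (Or.inl (Or.inr (Or.inl rfl))))
    · rw [mk_rep_pos]; simp only [one_mul, inv_one, mul_one]
  | bb h =>
    cases h with
    | chain ht => exact ⟨_, rel_of_tx ht, 1, by
        rw [mk_chainWord]; simp only [one_mul, inv_one, mul_one]⟩
    | @sym m hm as h =>
      refine ⟨_, ?_, _, mk_symWord S m as⟩
      unfold grpRels
      by_cases hf : S.isFunc m
      · rw [if_pos hf]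
        exact Or.inl (Or.inr ⟨m, hm, hf, as, rfl⟩)
      · rw [if_neg hf, mul_one]
        exact Or.inr ⟨m, hm, hf, as, h.resolve_left hf, rfl⟩

theorem BB_of_rel {r : FreeGroup (GenSym S.A)} (hr : r ∈ grpRels S p₁ p₂) :
    ∃ c, BB S p₁ p₂ c ∧ ∃ k, r = k * FreeGroup.mk c * k⁻¹ := by
  classical
  have tx : ∀ {x y : GenSym S.A} {lo : ℕ}, Tx x y lo →
      r = chainProd lo (FreeGroup.of x) (FreeGroup.of y) →
      ∃ c, BB S p₁ p₂ c ∧ ∃ k, r = k * FreeGroup.mk c * k⁻¹ := fun {x y lo} ht h =>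
    ⟨_, BB.bb (Bb.chain ht), 1, by
        rw [mk_chainWord, h]; simp only [one_mul, inv_one, mul_one]⟩
  have rep : ∀ {g : GenSym S.A} {n : ℕ},
      ((g = GenSym.f1 ∧ n = p₁) ∨ (g = GenSym.f2 ∧ n = p₂)) → r = FreeGroup.of g ^ n →
      ∃ c, BB S p₁ p₂ c ∧ ∃ k, r = k * FreeGroup.mk c * k⁻¹ := fun {g n} hg h =>
    ⟨_, BB.rep hg, 1, by rw [mk_rep_pos, h]; simp only [one_mul, inv_one, mul_one]⟩
  unfold grpRels at hr
  simp only [Set.mem_union, Set.mem_insert_iff, Set.mem_singleton_iff, Set.mem_ofPred_eq] at hr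
  rcases hr with ((h | ⟨a, h | h⟩) | ⟨m, hm, hf, as, h⟩) | ⟨m, hm, hf, as, hrel, h⟩
  · rcases h with h | h | h | h | h | h | h | h | h | h
    · exact rep (Or.inl ⟨rfl, rfl⟩) h
    · exact rep (Or.inr ⟨rfl, rfl⟩) h
    · exact tx Tx.v12 h
    · exact tx Tx.v21 h
    · exact tx Tx.b1 h
    · exact tx Tx.b2 h
    · exact tx Tx.c1 h
    · exact tx Tx.c2 h
    · exact tx Tx.d1 h
    · exact tx Tx.d2 h
  · exact tx (Tx.ac a) h
  · exact tx (Tx.ad a) h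
  · have e := mk_symWord S m as
    rw [if_pos hf, ← h] at e
    exact ⟨_, BB.bb (Bb.sym hm as (Or.inl hf)), _, e⟩
  · have e := mk_symWord S m as
    rw [if_neg hf, mul_one, ← h] at e
    exact ⟨_, BB.bb (Bb.sym hm as (Or.inr hrel)), _, e⟩

theorem RR_one (h1 : 10 ^ 10 < p₁) (h2 : 10 ^ 10 < p₂) {r : List (GenSym S.A × Bool)}
    (hr : r ∈ RR S p₁ p₂) : PresentedGroup.mk (grpRels S p₁ p₂) (FreeGroup.mk r) = 1 := by
  have key : ∀ (c r : List (GenSym S.A × Bool)), BB S p₁ p₂ c → r ~r c →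
      PresentedGroup.mk (grpRels S p₁ p₂) (FreeGroup.mk r) = 1 := by
    intro c r hc h
    have hrn : r ≠ [] := by
      rintro rfl
      exact hc.ne_nil h1 h2 (List.isRotated_nil_iff'.mp h).symm
    obtain ⟨w, hw, k, hk⟩ := rel_of_BB hc
    have hone := PresentedGroup.one_of_mem hw
    rw [hk, MonoidHom.map_mul, MonoidHom.map_mul, MonoidHom.map_inv, conj_eq_one_iff] at hone
    obtain ⟨a, b, e1, _, e3⟩ := rotated_split h hrn
    rw [e1, ← FreeGroup.mul_mk, MonoidHom.map_mul] at hone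
    rw [← e3, ← FreeGroup.mul_mk, MonoidHom.map_mul]
    exact mul_eq_one_comm.mp hone
  obtain ⟨c, hc, h | h⟩ := hr
  · exact key c r hc h
  · have := key c _ hc h
    rw [← FreeGroup.inv_mk, MonoidHom.map_inv, inv_eq_one] at this
    exact this

theorem hker (h1 : 10 ^ 10 < p₁) (h2 : 10 ^ 10 < p₂) (g : FreeGroup (GenSym S.A)) :
    PresentedGroup.mk (grpRels S p₁ p₂) g = 1 ↔ ∃ n, Ar (RR S p₁ p₂) n g := by
  constructor
  · intro h
    rw [PresentedGroup.mk_eq_one_iff] at h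
    have := arSub_normal (RR_sc (S := S) h1 h2)
    have hle : Subgroup.normalClosure (grpRels S p₁ p₂) ≤ arSub (RR_sc (S := S) h1 h2) := by
      refine Subgroup.normalClosure_le_normal fun r hr => ?_
      obtain ⟨c, hc, k, rfl⟩ := BB_of_rel hr
      exact ⟨1, Ar.step ⟨c, hc, Or.inl (List.IsRotated.refl c)⟩ (by
        rw [mul_inv_cancel]; exact Ar.one 0)⟩
    exact hle h
  · rintro ⟨n, hn⟩
    induction hn with
    | one n => exact MonoidHom.map_one _
    | step hr _ ih =>
      rw [MonoidHom.map_mul, MonoidHom.map_mul, RR_one h1 h2 hr, mul_one, ← MonoidHom.map_mul, ih]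

theorem main (h1 : 10 ^ 10 < p₁) (h2 : 10 ^ 10 < p₂) {k : ℕ} (hk : 1 ≤ k) (x : GA S p₁ p₂) (hx : x ≠ 1)
    (hxk : x ^ k = 1) : ∃ (g : GA S p₁ p₂) (n : ℤ),
      x = g * gen S p₁ p₂ GenSym.f1 ^ n * g⁻¹ ∨ x = g * gen S p₁ p₂ GenSym.f2 ^ n * g⁻¹ := by
  obtain ⟨a, b, g, ha, hb, hab, hcomm, hg⟩ := torsion (RR_sc (S := S) h1 h2)
    (PresentedGroup.mk (grpRels S p₁ p₂)) (PresentedGroup.mk_surjective _) (hker h1 h2) hk hxk hx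
  obtain ⟨n, hn⟩ := RR_comm hab ha hb hcomm
  refine ⟨g, n, hn.imp (fun h => ?_) (fun h => ?_)⟩
  · rw [hg, h, MonoidHom.map_zpow]; rfl
  · rw [hg, h, MonoidHom.map_zpow]; rfl

theorem gen_pow1 : gen S p₁ p₂ GenSym.f1 ^ p₁ = 1 := by
  have : FreeGroup.of (GenSym.f1 : GenSym S.A) ^ p₁ ∈ grpRels S p₁ p₂ :=
    Or.inl (Or.inl (Or.inl (Or.inl rfl)))
  have := PresentedGroup.one_of_mem this
  rw [MonoidHom.map_pow] at this
  exact this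

theorem gen_pow2 : gen S p₁ p₂ GenSym.f2 ^ p₂ = 1 := by
  have : FreeGroup.of (GenSym.f2 : GenSym S.A) ^ p₂ ∈ grpRels S p₁ p₂ :=
    Or.inl (Or.inl (Or.inl (Or.inr (Or.inl rfl))))
  have := PresentedGroup.one_of_mem this
  rw [MonoidHom.map_pow] at this
  exact this

theorem coprime_one {G : Type} [Group G] {x : G} {p q : ℕ} (hp : p.Prime) (hq : q.Prime)
    (hne : p ≠ q) (h1 : x ^ p = 1) (h2 : x ^ q = 1) : x = 1 := by
  have hc := (Nat.coprime_primes hp hq).mpr hne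
  have h := Nat.dvd_gcd (orderOf_dvd_of_pow_eq_one h1) (orderOf_dvd_of_pow_eq_one h2)
  rw [hc] at h
  exact orderOf_eq_one_iff.mp (Nat.dvd_one.mp h)

theorem conj_pow_one {G : Type} [Group G] {f g : G} {p : ℕ} (h : f ^ p = 1) (n : ℤ) :
    (g * f ^ n * g⁻¹) ^ p = 1 := by
  rw [conj_pow, ← zpow_natCast, ← zpow_mul, mul_comm, zpow_mul, zpow_natCast, h, one_zpow,
    mul_one, mul_inv_cancel]

theorem conj_dvd_one {G : Type} [Group G] {f g : G} {p : ℕ} (h : f ^ p = 1) {n : ℤ}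
    (hn : (p : ℤ) ∣ n) : g * f ^ n * g⁻¹ = 1 := by
  obtain ⟨m, rfl⟩ := hn
  rw [zpow_mul, zpow_natCast, h, one_zpow, mul_one, mul_inv_cancel]

end SmallCanc

/-- Lemma `torsion-implies-f`: fix `i = 1` or `i = 2`; if `x ∈ G(𝒜)`
satisfies `x^{p_i} = e` but `x ≠ e`, then `x` is a conjugate of `f_i^n` for some integer `n`
with `p_i ∤ n`. -/
theorem stmt_5 (S : IndexedStructure) (p₁ p₂ : ℕ)
    (hp₁ : p₁.Prime) (hp₂ : p₂.Prime) (hne : p₁ ≠ p₂)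
    (hbig₁ : 10 ^ 10 < p₁) (hbig₂ : 10 ^ 10 < p₂)
    (x : GA S p₁ p₂) (hx : x ≠ 1) :
    (x ^ p₁ = 1 → ∃ (g : GA S p₁ p₂) (n : ℤ), ¬ (p₁ : ℤ) ∣ n ∧
      x = g * gen S p₁ p₂ GenSym.f1 ^ n * g⁻¹) ∧
    (x ^ p₂ = 1 → ∃ (g : GA S p₁ p₂) (n : ℤ), ¬ (p₂ : ℤ) ∣ n ∧
      x = g * gen S p₁ p₂ GenSym.f2 ^ n * g⁻¹) := by
  constructor
  · intro hxp
    obtain ⟨g, n, h | h⟩ := SmallCanc.main hbig₁ hbig₂ hp₁.one_lt.le x hx hxp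
    · refine ⟨g, n, fun hd => hx ?_, h⟩
      rw [h]
      exact SmallCanc.conj_dvd_one SmallCanc.gen_pow1 hd
    · exfalso
      refine hx (SmallCanc.coprime_one hp₁ hp₂ hne hxp ?_)
      rw [h]
      exact SmallCanc.conj_pow_one SmallCanc.gen_pow2 n
  · intro hxp
    obtain ⟨g, n, h | h⟩ := SmallCanc.main hbig₁ hbig₂ hp₂.one_lt.le x hx hxp
    · exfalso
      refine hx (SmallCanc.coprime_one hp₁ hp₂ hne ?_ hxp)
      rw [h]
      exact SmallCanc.conj_pow_one SmallCanc.gen_pow1 n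
    · refine ⟨g, n, fun hd => hx ?_, h⟩
      rw [h]
      exact SmallCanc.conj_dvd_one SmallCanc.gen_pow2 hd
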